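/- arXiv:1607.05188 — 4 statements merged into one kernel-verified Lean document; each statement's English description precedes it below -/
import Mathlib

section
/- Let μ be a locally finite Borel measure on ℝ^d. For each i = 1,…,d let λ_i be a finite Borel measure on ℝ^d and v_i : ℝ^d → ℝ^d a Borel vector field with ‖v_i(x)‖ = 1 for λ_i-almost every x, and suppose there exist finite Borel measures σ_i⁺, σ_i⁻ on ℝ^d such that for every continuously differentiable function f : ℝ^d → ℝ with compact support one has ∫ ⟨∇f(x), v_i(x)⟩ dλ_i(x) = ∫ f dσ_i⁻ − ∫ f dσ_i⁺. Assume that μ is absolutely continuous with respect to λ_i for every i = 1,…,d, and that for μ-almost every x the vectors v_1(x),…,v_d(x) are linearly independent. Then μ is absolutely continuous with respect to the Lebesgue measure on ℝ^d. -/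
section
open MeasureTheory Metric
open scoped RealInnerProductSpace ENNReal

namespace DPR

/-- Euclidean space abbreviation. -/
abbrev E (d : ℕ) := EuclideanSpace ℝ (Fin d)

open scoped SchwartzMap FourierTransform LineDeriv Laplacian in
lemma eLpNorm_fourier {d : ℕ} (g : 𝓢(E d, ℂ)) :
    eLpNorm ⇑(𝓕 g : 𝓢(E d, ℂ)) 2 volume = eLpNorm g 2 volume := by
  have h := SchwartzMap.norm_fourier_toL2_eq g
  rw [SchwartzMap.norm_toLp, SchwartzMap.norm_toLp] at h
  exact (ENNReal.toReal_eq_toReal_iff' (SchwartzMap.eLpNorm_lt_top _ _ _).ne (SchwartzMap.eLpNorm_lt_top _ _ _).ne).1 h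

lemma atau_temperate {d : ℕ} (τ : ℝ) (hτ : 0 < τ) :
    (fun ξ : E d => (1 + τ * ‖ξ‖ ^ 2)⁻¹).HasTemperateGrowth := by
  have h1 := Function.hasTemperateGrowth_one_add_norm_sq_rpow (E d) (-1)
  have h2 : (fun ξ : E d => (Real.sqrt τ) • ξ).HasTemperateGrowth :=
    ((Real.sqrt τ) • ContinuousLinearMap.id ℝ (E d)).hasTemperateGrowth
  have := h1.comp h2
  have h3 : (fun ξ : E d => (1 + τ * ‖ξ‖ ^ 2)⁻¹)
      = ((fun x : E d => (1 + ‖x‖ ^ 2) ^ (-1 : ℝ)) ∘ fun ξ => √τ • ξ) := by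
    funext ξ
    simp only [Function.comp_apply, norm_smul, Real.rpow_neg_one, mul_pow]
    rw [Real.norm_of_nonneg (Real.sqrt_nonneg _), Real.sq_sqrt hτ.le]
  rw [h3]
  exact this

lemma atau_L2 {d : ℕ} (τ : ℝ) (hτ : 0 < τ) :
    eLpNorm (fun ξ : E d => ((1 + τ * ‖ξ‖ ^ 2)⁻¹) ^ (d + 1)) 2 volume < ∞ := by
  have hp : ∀ ξ : E d, 1 ≤ 1 + τ * ‖ξ‖ ^ 2 := fun ξ => by nlinarith [mul_nonneg hτ.le (sq_nonneg ‖ξ‖)]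
  have hcont : Continuous (fun ξ : E d => ((1 + τ * ‖ξ‖ ^ 2)⁻¹) ^ (d + 1)) := by
    refine Continuous.pow (Continuous.inv₀ (by fun_prop) fun ξ => ?_) _
    linarith [hp ξ] 
  have hint : Integrable (fun ξ : E d => (((1 + τ * ‖ξ‖ ^ 2)⁻¹) ^ (d + 1)) ^ 2) volume := by
    have h1 : Integrable (fun ξ : E d => (1 + ‖ξ‖ ^ 2) ^ (-(2 * (d + 1) : ℝ) / 2)) volume :=
      integrable_rpow_neg_one_add_norm_sq (by simp; linarith)
    have h2 := h1.comp_smul (Real.sqrt_pos.2 hτ).ne'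
    refine h2.mono' (by fun_prop) (Filter.Eventually.of_forall fun ξ => ?_)
    have h3 : 1 + ‖√τ • ξ‖ ^ 2 = 1 + τ * ‖ξ‖ ^ 2 := by
      rw [norm_smul, mul_pow, Real.norm_of_nonneg (Real.sqrt_nonneg _), Real.sq_sqrt hτ.le]
    rw [h3, Real.norm_of_nonneg (by positivity)]
    have h4 : (-(2 * (d + 1) : ℝ) / 2) = -((d + 1 : ℕ) : ℝ) := by push_cast; ring
    rw [h4, Real.rpow_neg (by positivity), Real.rpow_natCast, ← inv_pow]
    have h5 : ((1 + τ * ‖ξ‖ ^ 2)⁻¹) ^ (d + 1) ≤ 1 :=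
      pow_le_one₀ (by positivity) (inv_le_one_of_one_le₀ (hp ξ))
    have h6 : 0 ≤ ((1 + τ * ‖ξ‖ ^ 2)⁻¹) ^ (d + 1) := by positivity
    nlinarith
  exact ((memLp_two_iff_integrable_sq hcont.aestronglyMeasurable).2 hint).2

open scoped SchwartzMap FourierTransform LineDeriv Laplacian in
theorem fourier_split {d : ℕ} (τ : ℝ) (hτ : 0 < τ) : ∃ C : ℝ≥0∞, C ≠ ∞ ∧ ∀ g : 𝓢(E d, ℂ),
    ∃ u h : 𝓢(E d, ℂ), g = h - Δ u ∧ (∀ x, ‖h x‖ₑ ≤ C * eLpNorm g 2 volume) ∧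
      (∀ e e' : E d, ‖e‖ = 1 → ‖e'‖ = 1 →
        eLpNorm ⇑(∂_{e} (∂_{e'} u) : 𝓢(E d, ℂ)) 2 volume ≤ ENNReal.ofReal (d + 1) * eLpNorm g 2 volume) ∧
      (∀ e : E d, ‖e‖ = 1 →
        eLpNorm ⇑(∂_{e} u : 𝓢(E d, ℂ)) 2 volume ≤ ENNReal.ofReal ((d + 1) * √τ) * eLpNorm g 2 volume) := by
  set a : E d → ℝ := fun ξ => (1 + τ * ‖ξ‖ ^ 2)⁻¹ with ha
  have hat : a.HasTemperateGrowth := atau_temperate τ hτ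
  set M : E d → ℝ := fun ξ => (τ / (2 * Real.pi) ^ 2) * ∑ k ∈ Finset.range (d + 1), a ξ ^ (k + 1) with hM
  have hMt : M.HasTemperateGrowth := by
    refine Function.HasTemperateGrowth.mul (Function.HasTemperateGrowth.const _) ?_
    exact Function.HasTemperateGrowth.sum fun k _ => hat.pow _
  set H : E d → ℝ := fun ξ => a ξ ^ (d + 1) with hH
  have hHt : H.HasTemperateGrowth := hat.pow _
  have ha1 : ∀ ξ, 0 < a ξ ∧ a ξ ≤ 1 := fun ξ => by
    have : 1 ≤ 1 + τ * ‖ξ‖ ^ 2 := by nlinarith [mul_nonneg hτ.le (sq_nonneg ‖ξ‖)]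
    exact ⟨by positivity, inv_le_one_of_one_le₀ this⟩
  have hM0 : ∀ ξ, 0 ≤ M ξ := fun ξ => by
    have := (ha1 ξ).1.le
    simp only [hM]; positivity
  have hMle : ∀ ξ, M ξ ≤ (τ / (2 * Real.pi) ^ 2) * ((d + 1) * a ξ) := fun ξ => by
    simp only [hM]
    gcongr
    calc _ ≤ ∑ k ∈ Finset.range (d + 1), a ξ := by
          refine Finset.sum_le_sum fun k _ => ?_
          rw [pow_succ]
          exact mul_le_of_le_one_left (ha1 ξ).1.le (pow_le_one₀ (ha1 ξ).1.le (ha1 ξ).2)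
      _ = _ := by simp
  have hta : ∀ ξ, τ * ‖ξ‖ ^ 2 * a ξ = 1 - a ξ := fun ξ => by
      simp only [ha]
      have : 1 + τ * ‖ξ‖ ^ 2 ≠ 0 := by nlinarith [mul_nonneg hτ.le (sq_nonneg ‖ξ‖)]
      field_simp
      ring
  have hHM : ∀ ξ, H ξ + (2 * Real.pi) ^ 2 * ‖ξ‖ ^ 2 * M ξ = 1 := fun ξ => by
    have h1 := hta ξ
    have h2 := mul_neg_geom_sum (a ξ) (d + 1)
    simp only [hM, hH]
    have hp : (2 * Real.pi) ^ 2 ≠ 0 := by positivity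
    have : (2 * Real.pi) ^ 2 * ‖ξ‖ ^ 2 * ((τ / (2 * Real.pi) ^ 2) * ∑ k ∈ Finset.range (d + 1), a ξ ^ (k + 1))
      = (τ * ‖ξ‖ ^ 2 * a ξ) * ∑ k ∈ Finset.range (d + 1), a ξ ^ k := by
      simp only [pow_succ, ← Finset.sum_mul]
      field_simp
    rw [this, h1, h2]; ring
  refine ⟨eLpNorm H 2 volume, (atau_L2 τ hτ).ne, fun g => ?_⟩
  set u := SchwartzMap.fourierMultiplierCLM ℂ M g with hu
  set h := SchwartzMap.fourierMultiplierCLM ℂ H g with hh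
  have hFu : ∀ ξ, 𝓕 u ξ = M ξ • 𝓕 g ξ := fun ξ => by
    rw [hu, SchwartzMap.fourierMultiplierCLM_apply, FourierTransform.fourier_fourierInv_eq,
      SchwartzMap.smulLeftCLM_apply_apply hMt]
  have hFh : ∀ ξ, 𝓕 h ξ = H ξ • 𝓕 g ξ := fun ξ => by
    rw [hh, SchwartzMap.fourierMultiplierCLM_apply, FourierTransform.fourier_fourierInv_eq,
      SchwartzMap.smulLeftCLM_apply_apply hHt]
  have hFd : ∀ (e : E d) (w : 𝓢(E d, ℂ)) ξ, ‖𝓕 (∂_{e} w) ξ‖ = 2 * Real.pi * |⟪ξ, e⟫| * ‖𝓕 w ξ‖ := by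
    intro e w ξ
    rw [SchwartzMap.fourier_lineDerivOp_eq, smul_apply, SchwartzMap.smulLeftCLM_apply_apply (by fun_prop)]
    simp [norm_smul, abs_of_pos Real.pi_pos, mul_assoc]
  refine ⟨u, h, ?_, ?_, ?_, ?_⟩
  · have hL : ∀ ξ, 𝓕 (Δ u) ξ = -((2 * Real.pi) ^ 2 * ‖ξ‖ ^ 2) • 𝓕 u ξ := fun ξ => by
      rw [SchwartzMap.laplacian_eq_fourierMultiplierCLM, FourierTransform.fourier_smul, smul_apply,
        SchwartzMap.fourierMultiplierCLM_apply, FourierTransform.fourier_fourierInv_eq,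
        SchwartzMap.smulLeftCLM_apply_apply (by fun_prop), smul_smul]
      ring_nf
    have : 𝓕 g = 𝓕 (h - Δ u) := by
      rw [sub_eq_add_neg, FourierTransform.fourier_add, FourierTransform.fourier_neg]
      ext ξ
      rw [add_apply, neg_apply, hL, hFh, hFu, smul_smul, neg_mul, neg_smul, neg_neg, ← add_smul, hHM, one_smul]
    have h2 := congrArg (fun w : 𝓢(E d, ℂ) => (𝓕⁻ w : 𝓢(E d, ℂ))) this
    simpa only [FourierTransform.fourierInv_fourier_eq] using h2
  · intro x
    have h1 : h x = 𝓕⁻ (𝓕 h : 𝓢(E d, ℂ)) x := by rw [FourierTransform.fourierInv_fourier_eq]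
    have h2 : ‖h x‖ₑ ≤ ∫⁻ ξ, ‖𝓕 h ξ‖ₑ := by
      rw [h1, SchwartzMap.fourierInv_coe, Real.fourierInv_eq]
      refine (enorm_integral_le_lintegral_enorm _).trans_eq ?_
      refine lintegral_congr fun ξ => ?_
      rw [← ofReal_norm, ← ofReal_norm, Circle.norm_smul]
    refine h2.trans ?_
    have h3 : ∀ ξ, ‖𝓕 h ξ‖ₑ = ‖H ξ‖ₑ * ‖𝓕 g ξ‖ₑ := fun ξ => by rw [hFh, enorm_smul]
    simp_rw [h3]
    rw [← eLpNorm_fourier g]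
    have := ENNReal.lintegral_mul_le_Lp_mul_Lq (μ := (volume : Measure (E d))) (p := 2) (q := 2)
      (by constructor <;> norm_num) (f := fun ξ => ‖H ξ‖ₑ) (g := fun ξ => ‖𝓕 g ξ‖ₑ) (by fun_prop) (by fun_prop)
    refine this.trans_eq ?_
    simp [eLpNorm_eq_lintegral_rpow_enorm_toReal]
  · intro e e' he he'
    rw [← eLpNorm_fourier, ← eLpNorm_fourier g]
    refine eLpNorm_le_mul_eLpNorm_of_ae_le_mul (Filter.Eventually.of_forall fun ξ => ?_) 2
    rw [hFd, hFd, hFu, norm_smul, Real.norm_of_nonneg (hM0 ξ)]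
    have i1 : |⟪ξ, e⟫| ≤ ‖ξ‖ := by simpa [he] using abs_real_inner_le_norm ξ e
    have i2 : |⟪ξ, e'⟫| ≤ ‖ξ‖ := by simpa [he'] using abs_real_inner_le_norm ξ e'
    have h1 : τ * ‖ξ‖ ^ 2 * a ξ ≤ 1 := by linarith [hta ξ, (ha1 ξ).1]
    calc _ ≤ 2 * Real.pi * ‖ξ‖ * (2 * Real.pi * ‖ξ‖ * ((τ / (2 * Real.pi) ^ 2) * ((d + 1) * a ξ) * ‖𝓕 g ξ‖)) := by
          have := hMle ξ
          have := hM0 ξ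
          gcongr
      _ = (d + 1) * (τ * ‖ξ‖ ^ 2 * a ξ) * ‖𝓕 g ξ‖ := by field_simp
      _ ≤ (d + 1) * 1 * ‖𝓕 g ξ‖ := by gcongr
      _ = _ := by ring
  · intro e he
    rw [← eLpNorm_fourier, ← eLpNorm_fourier g]
    refine eLpNorm_le_mul_eLpNorm_of_ae_le_mul (Filter.Eventually.of_forall fun ξ => ?_) 2
    rw [hFd, hFu, norm_smul, Real.norm_of_nonneg (hM0 ξ)]
    have i1 : |⟪ξ, e⟫| ≤ ‖ξ‖ := by simpa [he] using abs_real_inner_le_norm ξ e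
    have h1 : √τ * ‖ξ‖ * a ξ ≤ 1 := by
      have := hta ξ
      have h0 : (√τ) ^ 2 = τ := Real.sq_sqrt hτ.le
      have h3 : (√τ * ‖ξ‖) ^ 2 * a ξ = 1 - a ξ := by rw [mul_pow, h0, this]
      nlinarith [(ha1 ξ).1, mul_nonneg (ha1 ξ).1.le (sq_nonneg (√τ * ‖ξ‖ - 1))]
    have hpi : 1 ≤ 2 * Real.pi := by linarith [Real.pi_gt_three]
    calc _ ≤ 2 * Real.pi * ‖ξ‖ * ((τ / (2 * Real.pi) ^ 2) * ((d + 1) * a ξ) * ‖𝓕 g ξ‖) := by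
          have := hMle ξ
          have := hM0 ξ
          gcongr
      _ = (2 * Real.pi)⁻¹ * ((d + 1) * √τ * (√τ * ‖ξ‖ * a ξ) * ‖𝓕 g ξ‖) := by
          have h0 : τ = √τ * √τ := (Real.mul_self_sqrt hτ.le).symm
          generalize √τ = t at h0
          rw [h0]; field_simp
      _ ≤ 1 * ((d + 1) * √τ * 1 * ‖𝓕 g ξ‖) := by
          have := (ha1 ξ).1.le
          gcongr
          exact inv_le_one_of_one_le₀ hpi
      _ = _ := by ring

end DPR
end

section
open MeasureTheory Metric
open scoped RealInnerProductSpace ENNReal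

namespace DPR

lemma cs_eLpNorm {α : Type*} [MeasurableSpace α] {μ : Measure α} {f g : α → ℝ≥0∞}
    (hf : AEMeasurable f μ) (hg : AEMeasurable g μ) :
    ∫⁻ x, f x * g x ∂μ ≤ eLpNorm f 2 μ * eLpNorm g 2 μ := by
  have := ENNReal.lintegral_mul_le_Lp_mul_Lq μ (p := 2) (q := 2)
      (by constructor <;> norm_num) hf hg
  refine this.trans_eq ?_
  simp [eLpNorm_eq_lintegral_rpow_enorm_toReal]

lemma eLpNorm_sq {α : Type*} [MeasurableSpace α] {μ : Measure α} (f : α → ℝ≥0∞) :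
    eLpNorm f 2 μ * eLpNorm f 2 μ = ∫⁻ x, f x * f x ∂μ := by
  rw [eLpNorm_eq_lintegral_rpow_enorm_toReal (by simp) (by simp), ← ENNReal.rpow_add_of_nonneg _ _ (by simp) (by simp)]
  norm_num
  simp_rw [← sq]

/-- Poisson-like kernel. -/
noncomputable def pk {d : ℕ} (r : ℝ) (z : E d) : ℝ≥0∞ := ENNReal.ofReal (r / (r + ‖z‖) ^ (d + 1))

lemma pk_neg {d : ℕ} (r : ℝ) (z : E d) : pk r (-z) = pk r z := by simp [pk]

lemma pk_sub {d : ℕ} (r : ℝ) (z w : E d) : pk r (z - w) = pk r (w - z) := by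
  rw [← neg_sub, pk_neg]

lemma pk_meas {d : ℕ} : Measurable (fun q : ℝ × E d => pk q.1 q.2) := by
  unfold pk; fun_prop

lemma pk_meas' {d : ℕ} {α : Type*} [MeasurableSpace α] {r : α → ℝ} {z : α → E d}
    (hr : Measurable r) (hz : Measurable z) : Measurable (fun q => pk (r q) (z q)) :=
  pk_meas.comp (hr.prodMk hz)

/-- Mass of the kernel. -/
noncomputable def pI (d : ℕ) : ℝ≥0∞ := ∫⁻ z : E d, pk 1 z

lemma pI_ne_top (d : ℕ) : pI d ≠ ∞ := by
  have h := finite_integral_one_add_norm (E := E d) (μ := volume) (r := d + 1) (by simp)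
  refine ne_of_lt (lt_of_eq_of_lt ?_ h)
  refine lintegral_congr fun z => ?_
  unfold pk
  have : (-((d : ℝ) + 1)) = -((d + 1 : ℕ) : ℝ) := by push_cast; ring
  rw [this, Real.rpow_neg (by positivity), Real.rpow_natCast, one_div]

lemma lintegral_scale {d : ℕ} {r : ℝ} (hr : 0 < r) {F : E d → ℝ≥0∞} (hF : Measurable F) :
    ∫⁻ z : E d, F (r • z) = ENNReal.ofReal (r ^ d)⁻¹ * ∫⁻ z, F z := by
  have h1 := Measure.map_addHaar_smul (volume : Measure (E d)) hr.ne'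
  rw [← lintegral_map (μ := volume) hF (measurable_const_smul r), h1, lintegral_smul_measure]
  simp only [finrank_euclideanSpace, Fintype.card_fin, smul_eq_mul]
  rw [abs_of_pos (by positivity)]

lemma lintegral_pk {d : ℕ} {r : ℝ} (hr : 0 < r) : ∫⁻ z : E d, pk r z = pI d := by
  have h := lintegral_scale hr (F := fun z : E d => pk r z) (pk_meas' measurable_const measurable_id)
  have h2 : ∀ z : E d, pk r (r • z) = ENNReal.ofReal (r ^ d)⁻¹ * pk 1 z := fun z => by
    unfold pk
    rw [← ENNReal.ofReal_mul (by positivity)]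
    congr 1
    rw [norm_smul, Real.norm_of_nonneg hr.le]
    have : 0 < 1 + ‖z‖ := by positivity
    rw [show r + r * ‖z‖ = r * (1 + ‖z‖) by ring, mul_pow]
    field_simp
    ring
  simp_rw [h2] at h
  rw [lintegral_const_mul _ (by exact pk_meas' measurable_const measurable_id)] at h
  have hp : ENNReal.ofReal (r ^ d)⁻¹ ≠ 0 := by
    rw [ne_eq, ENNReal.ofReal_eq_zero, not_le]; positivity
  exact ((ENNReal.mul_right_inj hp ENNReal.ofReal_ne_top).1 h).symm

lemma lintegral_pk_sub {d : ℕ} {r : ℝ} (hr : 0 < r) (x : E d) : ∫⁻ z : E d, pk r (z - x) = pI d := by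
  rw [lintegral_sub_right_eq_self (fun z => pk r z) x, lintegral_pk hr]

lemma lintegral_pk_sub' {d : ℕ} {r : ℝ} (hr : 0 < r) (x : E d) : ∫⁻ z : E d, pk r (x - z) = pI d := by
  simp_rw [pk_sub r x]
  exact lintegral_pk_sub hr x

lemma pk_half {d : ℕ} {r : ℝ} (hr : 0 < r) {z w : E d} (c : ℝ) (hc : 1 ≤ c) (h : ‖w‖ ≤ c * ‖z‖) :
    pk r z ≤ ENNReal.ofReal (c ^ (d + 1)) * pk r w := by
  unfold pk
  rw [← ENNReal.ofReal_mul (by positivity)]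
  apply ENNReal.ofReal_le_ofReal
  have h1 : r + ‖w‖ ≤ c * (r + ‖z‖) := by nlinarith
  have h2 : (r + ‖w‖) ^ (d + 1) ≤ c ^ (d + 1) * (r + ‖z‖) ^ (d + 1) := by
    rw [← mul_pow]; gcongr
  rw [mul_div_assoc', div_le_div_iff₀ (by positivity) (by positivity)]
  nlinarith

lemma pk_conv {d : ℕ} {a b : ℝ} (ha : 0 < a) (hb : 0 < b) (x y : E d) :
    ∫⁻ z, pk a (x - z) * pk b (y - z) ≤
      ENNReal.ofReal (2 ^ (d + 1)) * pI d * (pk a (x - y) + pk b (y - x)) := by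
  have key : ∀ z, pk a (x - z) * pk b (y - z) ≤
      ENNReal.ofReal (2 ^ (d + 1)) * pk a (x - y) * pk b (y - z)
        + ENNReal.ofReal (2 ^ (d + 1)) * pk b (y - x) * pk a (x - z) := fun z => by
    have ht : ‖x - y‖ ≤ ‖x - z‖ + ‖y - z‖ := by
      calc ‖x - y‖ = ‖(x - z) - (y - z)‖ := by congr 1; abel
        _ ≤ _ := norm_sub_le _ _
    rcases le_total ‖y - z‖ ‖x - z‖ with h | h
    · refine le_trans ?_ le_self_add
      gcongr
      exact pk_half ha 2 (by norm_num) (by linarith)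
    · refine le_trans ?_ le_add_self
      rw [mul_comm (pk a _)]
      gcongr
      exact pk_half hb 2 (by norm_num) (by rw [norm_sub_rev]; linarith)
  refine (lintegral_mono key).trans_eq ?_
  have m1 : Measurable fun z : E d => pk b (y - z) := pk_meas' measurable_const (by fun_prop)
  have m2 : Measurable fun z : E d => pk a (x - z) := pk_meas' measurable_const (by fun_prop)
  rw [lintegral_add_left (by fun_prop), lintegral_const_mul _ m1, lintegral_const_mul _ m2,
    lintegral_pk_sub' ha, lintegral_pk_sub' hb]
  ring

/-- adjoint averaging operator -/
noncomputable def Aop {d : ℕ} (r : E d → ℝ) (g : E d → ℝ≥0∞) (z : E d) : ℝ≥0∞ :=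
  ∫⁻ y, pk (r y) (y - z) * g y

lemma Aop_meas {d : ℕ} {r : E d → ℝ} {g : E d → ℝ≥0∞} (hr : Measurable r) (hg : Measurable g) :
    Measurable (Aop r g) := by
  unfold Aop
  refine Measurable.lintegral_prod_right' (f := fun q : E d × E d => pk (r q.2) (q.2 - q.1) * g q.2) ?_
  exact (pk_meas' (by fun_prop) (by fun_prop)).fun_mul (by fun_prop)

lemma Aop_bound {d : ℕ} {r : E d → ℝ} {δ : ℝ} (hδ : 0 < δ) (hrδ : ∀ y, δ ≤ r y) (hr : Measurable r)
    {g : E d → ℝ≥0∞} (hg : Measurable g) (hgi : ∫⁻ y, g y ≠ ∞) :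
    eLpNorm (Aop r g) 2 volume ≤ 2 * (ENNReal.ofReal (2 ^ (d + 1)) * pI d) * eLpNorm g 2 volume := by
  have hpos : ∀ y, 0 < r y := fun y => hδ.trans_le (hrδ y)
  set C := ENNReal.ofReal (2 ^ (d + 1)) * pI d with hC
  have hAm := Aop_meas hr hg
  have hpm : Measurable fun q : E d × E d => pk (r q.2) (q.2 - q.1) := pk_meas' (by fun_prop) (by fun_prop)
  -- integral of Aop
  have hA1 : ∫⁻ z, Aop r g z = pI d * ∫⁻ y, g y := by
    unfold Aop
    rw [lintegral_lintegral_swap (by exact (hpm.fun_mul (by fun_prop)).aemeasurable)]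
    rw [← lintegral_const_mul _ hg]
    refine lintegral_congr fun y => ?_
    rw [lintegral_mul_const _ (pk_meas' measurable_const (by fun_prop)), lintegral_pk_sub' (hpos y)]
  -- sup bound
  have hA2 : ∀ z, Aop r g z ≤ ENNReal.ofReal (δ ^ d)⁻¹ * ∫⁻ y, g y := fun z => by
    unfold Aop
    rw [← lintegral_const_mul _ hg]
    refine lintegral_mono fun y => ?_
    gcongr
    unfold pk
    apply ENNReal.ofReal_le_ofReal
    have := hpos y
    calc r y / (r y + ‖y - z‖) ^ (d + 1) ≤ r y / (r y) ^ (d + 1) := by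
          gcongr; linarith [norm_nonneg (y - z)]
      _ = (r y ^ d)⁻¹ := by rw [pow_succ]; field_simp
      _ ≤ (δ ^ d)⁻¹ := by
          have := hrδ y
          gcongr
  have hfin : eLpNorm (Aop r g) 2 volume ≠ ∞ := by
    intro h
    have h1 := eLpNorm_sq (μ := volume) (Aop r g)
    rw [h] at h1
    have h2 : ∫⁻ z, Aop r g z * Aop r g z ≤ (ENNReal.ofReal (δ ^ d)⁻¹ * ∫⁻ y, g y) * (pI d * ∫⁻ y, g y) := by
      rw [← hA1, ← lintegral_const_mul _ hAm]
      exact lintegral_mono fun z => by gcongr; exact hA2 z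
    rw [← h1] at h2
    rw [ENNReal.top_mul_top, top_le_iff] at h2
    exact absurd h2 (ENNReal.mul_ne_top (ENNReal.mul_ne_top ENNReal.ofReal_ne_top hgi)
      (ENNReal.mul_ne_top (pI_ne_top d) hgi))
  have hsq : ∫⁻ z, Aop r g z * Aop r g z ≤ 2 * C * ∫⁻ z, g z * Aop r g z := by
    have e1 : ∀ z, Aop r g z * Aop r g z = ∫⁻ y, ∫⁻ y', (g y * g y') * (pk (r y) (y - z) * pk (r y') (y' - z)) := fun z => by
      conv_lhs => unfold Aop
      rw [← lintegral_mul_const _ (by exact (pk_meas' hr (by fun_prop)).fun_mul hg)]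
      refine lintegral_congr fun y => ?_
      rw [← lintegral_const_mul _ (by exact (pk_meas' hr (by fun_prop)).fun_mul hg)]
      refine lintegral_congr fun y' => ?_
      ring
    have m3 : Measurable fun q : (E d × E d) × E d => (g q.1.2 * g q.2) * (pk (r q.1.2) (q.1.2 - q.1.1) * pk (r q.2) (q.2 - q.1.1)) := by
      refine Measurable.fun_mul (by fun_prop) (Measurable.fun_mul ?_ ?_)
      · exact pk_meas' (by fun_prop) (by fun_prop)
      · exact pk_meas' (by fun_prop) (by fun_prop)
    simp_rw [e1]
    rw [lintegral_lintegral_swap (by exact (Measurable.lintegral_prod_right m3).aemeasurable)]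
    have e2 : ∀ y, ∫⁻ z, ∫⁻ y', (g y * g y') * (pk (r y) (y - z) * pk (r y') (y' - z))
        ≤ ∫⁻ y', (g y * g y') * (C * (pk (r y) (y - y') + pk (r y') (y' - y))) := fun y => by
      rw [lintegral_lintegral_swap]
      · refine lintegral_mono fun y' => ?_
        rw [lintegral_const_mul _ (by exact (pk_meas' measurable_const (by fun_prop)).fun_mul (pk_meas' measurable_const (by fun_prop)))]
        gcongr
        exact pk_conv (hpos y) (hpos y') y y'
      · have : Measurable fun q : E d × E d => ((q.1, y), q.2) := by fun_prop
        exact (m3.comp this).aemeasurable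
    refine (lintegral_mono e2).trans ?_
    have e3 : ∀ y y', (g y * g y') * (C * (pk (r y) (y - y') + pk (r y') (y' - y)))
      = C * (g y' * (pk (r y) (y - y') * g y)) + C * (g y * (pk (r y') (y' - y) * g y')) := fun y y' => by ring
    simp_rw [e3]
    have m4 : Measurable fun q : E d × E d => C * (g q.2 * (pk (r q.1) (q.1 - q.2) * g q.1)) :=
      Measurable.const_mul (Measurable.fun_mul (by fun_prop) (Measurable.fun_mul (pk_meas' (by fun_prop) (by fun_prop)) (by fun_prop))) _
    have e4 : ∀ y, ∫⁻ y', (C * (g y' * (pk (r y) (y - y') * g y)) + C * (g y * (pk (r y') (y' - y) * g y')))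
      = (∫⁻ y', (C * (g y' * (pk (r y) (y - y') * g y)))) + C * (g y * Aop r g y) := fun y => by
      rw [lintegral_add_left (by exact m4.comp (measurable_prodMk_left (x := y)))]
      congr 1
      have mm : Measurable fun y' => pk (r y') (y' - y) * g y' := (pk_meas' hr (by fun_prop)).fun_mul hg
      rw [lintegral_const_mul _ (mm.const_mul _), lintegral_const_mul _ mm]
      rfl
    simp_rw [e4]
    rw [lintegral_add_right _ ((hg.fun_mul hAm).const_mul _), lintegral_lintegral_swap m4.aemeasurable]
    have e5 : ∀ y', ∫⁻ y, (C * (g y' * (pk (r y) (y - y') * g y))) = C * (g y' * Aop r g y') := fun y' => by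
      have mm : Measurable fun y => pk (r y) (y - y') * g y := (pk_meas' hr (by fun_prop)).fun_mul hg
      rw [lintegral_const_mul _ (mm.const_mul _), lintegral_const_mul _ mm]
      rfl
    simp_rw [e5]
    rw [lintegral_const_mul _ (hg.fun_mul hAm)]
    apply le_of_eq
    ring
  rw [← eLpNorm_sq] at hsq
  have h3 := hsq.trans (mul_le_mul_right (cs_eLpNorm hg.aemeasurable hAm.aemeasurable) _)
  rw [← mul_assoc] at h3
  by_cases h0 : eLpNorm (Aop r g) 2 volume = 0
  · rw [h0]; exact zero_le
  · exact (ENNReal.mul_le_mul_iff_left h0 hfin).1 h3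

lemma kernel_bound {d : ℕ} {r : E d → ℝ} {δ : ℝ} (hδ : 0 < δ) (hrδ : ∀ y, δ ≤ r y) (hr : Measurable r)
    {W f : E d → ℝ≥0∞} (hW : Measurable W) (hWi : ∫⁻ y, W y ≠ ∞) (hf : Measurable f) :
    ∫⁻ y, W y * ∫⁻ z, pk (r y) (y - z) * f z ≤
      2 * (ENNReal.ofReal (2 ^ (d + 1)) * pI d) * eLpNorm f 2 volume * eLpNorm W 2 volume := by
  have e : ∫⁻ y, W y * ∫⁻ z, pk (r y) (y - z) * f z = ∫⁻ z, f z * Aop r W z := by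
    have : ∀ y, W y * ∫⁻ z, pk (r y) (y - z) * f z = ∫⁻ z, f z * (pk (r y) (y - z) * W y) := fun y => by
      rw [← lintegral_const_mul _ (by exact (pk_meas' measurable_const (by fun_prop)).fun_mul hf)]
      exact lintegral_congr fun z => by ring
    simp_rw [this]
    rw [lintegral_lintegral_swap]
    · refine lintegral_congr fun z => ?_
      rw [lintegral_const_mul _ (by exact (pk_meas' hr (by fun_prop)).fun_mul hW)]
      rfl
    · refine Measurable.aemeasurable ?_
      exact Measurable.fun_mul (by fun_prop) (Measurable.fun_mul (pk_meas' (by fun_prop) (by fun_prop)) (by fun_prop))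
  rw [e]
  refine (cs_eLpNorm hf.aemeasurable (Aop_meas hr hW).aemeasurable).trans ?_
  calc _ ≤ eLpNorm f 2 volume * (2 * (ENNReal.ofReal (2 ^ (d + 1)) * pI d) * eLpNorm W 2 volume) := by
        gcongr; exact Aop_bound hδ hrδ hr hW hWi
    _ = _ := by ring

end DPR
end

section
open MeasureTheory Metric
open scoped RealInnerProductSpace ENNReal NNReal Convolution

namespace DPR

lemma exists_s {d : ℕ} (K : Set (E d)) {δ ε : ℝ} (hδ : 0 < δ) (hε : 0 < ε) (hε4 : ε ≤ 1 / 4) :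
    ∃ s : E d → ℝ, ContDiff ℝ 1 s ∧ (∀ x, ‖fderiv ℝ s x‖ ≤ ε) ∧ (∀ x y, |s x - s y| ≤ ε * ‖x - y‖) ∧
      (∀ x, ε * (δ + infDist x K) ≤ s x) ∧ (∀ x, s x ≤ 2 * (δ + infDist x K)) := by
  let φ : ContDiffBump (0 : E d) := ⟨δ / 2, δ, by positivity, by linarith⟩
  set ρ : E d → ℝ := fun x => infDist x K with hρ
  have hρc : Continuous ρ := continuous_infDist_pt K
  have hρl : ∀ x y, |ρ x - ρ y| ≤ ‖x - y‖ := fun x y => by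
    rw [← dist_eq_norm, ← Real.dist_eq]
    simpa using (lipschitz_infDist_pt K).dist_le_mul x y
  set m : E d → ℝ := (φ.normed volume ⋆[ContinuousLinearMap.lsmul ℝ ℝ] ρ : E d → ℝ) with hm
  have hm1 : ContDiff ℝ 1 m :=
    φ.hasCompactSupport_normed.contDiff_convolution_left _ φ.contDiff_normed hρc.locallyIntegrable
  have hm2 : ∀ x, |m x - ρ x| ≤ δ := fun x => by
    rw [← Real.dist_eq]
    refine ContDiffBump.dist_normed_convolution_le hρc.aestronglyMeasurable fun y hy => ?_
    rw [Real.dist_eq]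
    refine (hρl y x).trans ?_
    rw [← dist_eq_norm]
    exact (mem_ball.1 hy).le
  have hint : ∀ x, Integrable (fun t => φ.normed volume t * ρ (x - t)) := fun x =>
    (φ.continuous_normed.mul (hρc.comp (by fun_prop))).integrable_of_hasCompactSupport
      (φ.hasCompactSupport_normed.mul_right)
  have hmx : ∀ x, m x = ∫ t, φ.normed volume t * ρ (x - t) := fun x => rfl
  have hm3 : ∀ x y, |m x - m y| ≤ ‖x - y‖ := fun x y => by
    rw [hmx, hmx, ← integral_sub (hint x) (hint y), ← Real.norm_eq_abs]
    have h1 : Integrable (fun t => φ.normed volume t * ‖x - y‖) := φ.integrable_normed.mul_const _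
    refine (norm_integral_le_of_norm_le h1 (Filter.Eventually.of_forall fun t => ?_)).trans_eq ?_
    · rw [← mul_sub, norm_mul, Real.norm_of_nonneg (φ.nonneg_normed _)]
      gcongr
      · exact φ.nonneg_normed _
      · refine (hρl _ _).trans_eq ?_
        congr 1; abel
    · rw [integral_mul_const, φ.integral_normed, one_mul]
  have hsl : ∀ x y, |(δ + ε * m x) - (δ + ε * m y)| ≤ ε * ‖x - y‖ := fun x y => by
    rw [add_sub_add_left_eq_sub, ← mul_sub, abs_mul, abs_of_pos hε]
    gcongr; exact hm3 x y
  refine ⟨fun x => δ + ε * m x, by fun_prop, fun x => ?_, hsl, fun x => ?_, fun x => ?_⟩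
  · have hL : LipschitzWith (Real.toNNReal ε) (fun x => δ + ε * m x) :=
      LipschitzWith.of_dist_le_mul fun x y => by
        rw [Real.dist_eq, dist_eq_norm, Real.coe_toNNReal _ hε.le]; exact hsl x y
    simpa [hε.le] using norm_fderiv_le_of_lipschitz ℝ hL (x₀ := x)
  · have h1 := (abs_le.1 (hm2 x)).1
    have h2 : 0 ≤ ρ x := infDist_nonneg
    show ε * (δ + ρ x) ≤ δ + ε * m x
    nlinarith
  · have h1 := (abs_le.1 (hm2 x)).2
    have h2 : 0 ≤ ρ x := infDist_nonneg
    show δ + ε * m x ≤ 2 * (δ + ρ x)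
    nlinarith

end DPR
end

section
open MeasureTheory Metric
open scoped RealInnerProductSpace ENNReal NNReal

namespace DPR

/-- kernel for the averaged measure -/
noncomputable def kV {d : ℕ} (s : E d → ℝ) (x y : E d) : ℝ≥0∞ :=
  {q : E d × E d | ‖q.2 - q.1‖ ≤ s q.1}.indicator (fun q => ENNReal.ofReal (s q.1 ^ d)⁻¹) (x, y)

lemma kV_meas {d : ℕ} {s : E d → ℝ} (hs : Continuous s) :
    Measurable (fun q : E d × E d => kV s q.1 q.2) := by
  have : MeasurableSet {q : E d × E d | ‖q.2 - q.1‖ ≤ s q.1} :=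
    measurableSet_le (by fun_prop) (by fun_prop)
  exact Measurable.indicator (by fun_prop) this

lemma kV_meas_left {d : ℕ} {s : E d → ℝ} (hs : Continuous s) (y : E d) :
    Measurable (fun x : E d => kV s x y) := by
  have : MeasurableSet {x : E d | ‖y - x‖ ≤ s x} :=
    measurableSet_le (by fun_prop) (by fun_prop)
  have h2 : Measurable fun x : E d => ENNReal.ofReal (s x ^ d)⁻¹ := by fun_prop
  exact h2.indicator this

/-- density of the averaged measure -/
noncomputable def V {d : ℕ} (s : E d → ℝ) (m : Measure (E d)) (y : E d) : ℝ≥0∞ := ∫⁻ x, kV s x y ∂m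

lemma V_meas {d : ℕ} {s : E d → ℝ} (hs : Continuous s) (m : Measure (E d)) [SFinite m] :
    Measurable (V s m) := by
  unfold V
  exact Measurable.lintegral_prod_left' (f := fun q : E d × E d => kV s q.1 q.2) (kV_meas hs)

lemma kV_scale {d : ℕ} {s : E d → ℝ} (x : E d) (hsx : 0 < s x) {F : E d → ℝ≥0∞} (hF : Measurable F) :
    ∫⁻ z in closedBall (0 : E d) 1, F (x + s x • z) = ∫⁻ y, F y * kV s x y := by
  have hm : Measurable fun w : E d => (closedBall (0 : E d) (s x)).indicator (fun w => F (x + w)) w :=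
    Measurable.indicator (by fun_prop) measurableSet_closedBall
  have h := lintegral_scale hsx hm
  have h1 : ∀ z : E d, (closedBall (0 : E d) (s x)).indicator (fun w => F (x + w)) (s x • z)
      = (closedBall (0 : E d) 1).indicator (fun z => F (x + s x • z)) z := fun z => by
    by_cases hz : ‖z‖ ≤ 1
    · rw [Set.indicator_of_mem, Set.indicator_of_mem]
      · simpa using hz
      · simp [norm_smul, abs_of_pos hsx]
        nlinarith
    · rw [Set.indicator_of_notMem, Set.indicator_of_notMem]
      · simpa using hz
      · simp [norm_smul, abs_of_pos hsx]
        push Not at hz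
        nlinarith
  simp_rw [h1] at h
  rw [lintegral_indicator measurableSet_closedBall] at h
  rw [h, ← lintegral_const_mul _ hm, ← lintegral_sub_right_eq_self _ x]
  refine lintegral_congr fun y => ?_
  unfold kV
  by_cases hy : ‖y - x‖ ≤ s x
  · rw [Set.indicator_of_mem (by simpa using hy), Set.indicator_of_mem (by simpa using hy), mul_comm]
    simp
  · rw [Set.indicator_of_notMem (by simpa using hy), Set.indicator_of_notMem (by simpa using hy)]
    simp

/-- volume of the unit ball -/
noncomputable def om (d : ℕ) : ℝ≥0∞ := volume (closedBall (0 : E d) 1)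

lemma om_ne_top (d : ℕ) : om d ≠ ∞ := measure_closedBall_lt_top.ne
lemma om_ne_zero (d : ℕ) : om d ≠ 0 := (measure_closedBall_pos _ _ one_pos).ne'

/-- averaging map -/
def Phi {d : ℕ} (s : E d → ℝ) (q : E d × E d) : E d := q.2 + s q.2 • q.1

lemma map_Phi {d : ℕ} {s : E d → ℝ} (hs : Continuous s) (hpos : ∀ x, 0 < s x)
    (m : Measure (E d)) [SFinite m] :
    Measure.map (Phi s) ((volume.restrict (closedBall (0 : E d) 1)).prod m)
      = volume.withDensity (V s m) := by
  have hPm : Measurable (Phi s) := by unfold Phi; fun_prop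
  refine Measure.ext_of_lintegral _ fun F hF => ?_
  rw [lintegral_map hF hPm, lintegral_withDensity_eq_lintegral_mul _ (V_meas hs m) hF]
  rw [lintegral_prod_symm' _ (by fun_prop)]
  have h1 : ∀ x, ∫⁻ z in closedBall (0 : E d) 1, F (Phi s (z, x)) = ∫⁻ y, F y * kV s x y :=
    fun x => kV_scale x (hpos x) hF
  simp_rw [h1]
  rw [lintegral_lintegral_swap]
  · refine lintegral_congr fun y => ?_
    have mk := kV_meas_left hs y
    rw [lintegral_const_mul _ mk, Pi.mul_apply, mul_comm, V]
  · have h2 := kV_meas hs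
    have h3 : Measurable fun q : E d × E d => F q.2 := by fun_prop
    exact (h3.mul h2).aemeasurable

lemma lintegral_V {d : ℕ} {s : E d → ℝ} (hs : Continuous s) (hpos : ∀ x, 0 < s x)
    (m : Measure (E d)) [SFinite m] {F : E d → ℝ≥0∞} (hF : Measurable F) :
    ∫⁻ z in closedBall (0 : E d) 1, ∫⁻ x, F (x + s x • z) ∂m = ∫⁻ y, F y * V s m y := by
  have hPm : Measurable (Phi s) := by unfold Phi; fun_prop
  have h := congrArg (fun M : Measure (E d) => ∫⁻ y, F y ∂M) (map_Phi hs hpos m)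
  rw [lintegral_map hF hPm, lintegral_withDensity_eq_lintegral_mul _ (V_meas hs m) hF,
    lintegral_prod _ (by fun_prop)] at h
  simp only [Phi] at h
  rw [h]
  exact lintegral_congr fun y => by rw [Pi.mul_apply, mul_comm]

lemma lintegral_V_one {d : ℕ} {s : E d → ℝ} (hs : Continuous s) (hpos : ∀ x, 0 < s x)
    (m : Measure (E d)) [SFinite m] : ∫⁻ y, V s m y = om d * m Set.univ := by
  have h := lintegral_V hs hpos m (F := fun _ => 1) measurable_const
  simp only [lintegral_const, one_mul, Measure.restrict_apply_univ] at h
  rw [← h, mul_comm, om]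

lemma V_le {d : ℕ} {s : E d → ℝ} (hs : Continuous s) (m : Measure (E d)) (t : ℝ) (ht : 0 < t) (y : E d)
    (h : ∀ x, ‖y - x‖ ≤ s x → t ≤ s x) (S : Set (E d)) (hS : MeasurableSet S)
    (hS2 : ∀ x, ‖y - x‖ ≤ s x → x ∈ S) :
    V s m y ≤ ENNReal.ofReal (t ^ d)⁻¹ * m S := by
  unfold V
  rw [← lintegral_indicator_const hS]
  refine lintegral_mono fun x => ?_
  unfold kV
  by_cases hx : ‖y - x‖ ≤ s x
  · rw [Set.indicator_of_mem (by simpa using hx), Set.indicator_of_mem (hS2 x hx)]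
    apply ENNReal.ofReal_le_ofReal
    have := h x hx
    simp only
    gcongr
  · rw [Set.indicator_of_notMem (by simpa using hx)]
    exact zero_le

lemma pk_half' {d : ℕ} {r : ℝ} (hr : 0 < r) {z w : E d} (c : ℝ) (hc : 0 ≤ c) (h1 : r + ‖w‖ ≤ c * (r + ‖z‖)) :
    pk r z ≤ ENNReal.ofReal (c ^ (d + 1)) * pk r w := by
  unfold pk
  rw [← ENNReal.ofReal_mul (by positivity)]
  apply ENNReal.ofReal_le_ofReal
  have h2 : (r + ‖w‖) ^ (d + 1) ≤ c ^ (d + 1) * (r + ‖z‖) ^ (d + 1) := by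
    rw [← mul_pow]; gcongr
  rw [mul_div_assoc', div_le_div_iff₀ (by positivity) (by positivity)]
  nlinarith

lemma pk_avg {d : ℕ} {s : E d → ℝ} (hs : Continuous s) (hpos : ∀ x, 0 < s x)
    (ν : Measure (E d)) [SFinite ν] (y : E d) {r : ℝ} (hr : 0 < r) (hsr : ∀ x, s x ≤ 2 * (r + ‖y - x‖)) :
    om d * ∫⁻ x, pk r (y - x) ∂ν ≤ ENNReal.ofReal (3 ^ (d + 1)) * ∫⁻ z, pk r (y - z) * V s ν z := by
  have hm : Measurable fun z : E d => pk r (y - z) := pk_meas' measurable_const (by fun_prop)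
  rw [← lintegral_V hs hpos ν hm]
  rw [← lintegral_const_mul' (ENNReal.ofReal (3 ^ (d + 1))) _ ENNReal.ofReal_ne_top]
  have : om d * ∫⁻ x, pk r (y - x) ∂ν = ∫⁻ z in closedBall (0 : E d) 1, ∫⁻ x, pk r (y - x) ∂ν := by
    rw [lintegral_const, Measure.restrict_apply_univ, mul_comm]; rfl
  rw [this]
  refine setLIntegral_mono' measurableSet_closedBall fun z hz => ?_
  rw [← lintegral_const_mul' _ _ ENNReal.ofReal_ne_top]
  refine lintegral_mono fun x => ?_
  refine pk_half' hr 3 (by norm_num) ?_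
  have hz1 : ‖z‖ ≤ 1 := by simpa using hz
  have h1 : ‖y - (x + s x • z)‖ ≤ ‖y - x‖ + s x := by
    calc _ = ‖(y - x) - s x • z‖ := by congr 1; abel
      _ ≤ ‖y - x‖ + ‖s x • z‖ := norm_sub_le _ _
      _ ≤ _ := by
        rw [norm_smul, Real.norm_of_nonneg (hpos x).le]
        nlinarith [hpos x]
  linarith [hsr x]

/-- constant in the near estimate -/
noncomputable def Acst (d : ℕ) (ε : ℝ) : ℝ≥0∞ :=
  ENNReal.ofReal (2 ^ d * (ε ^ d)⁻¹ * 17 ^ (d + 1)) * ((om d)⁻¹ * ENNReal.ofReal (3 ^ (d + 1)))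

/-- total constant -/
noncomputable def Atot (d : ℕ) (ε : ℝ) : ℝ≥0∞ :=
  Acst d ε * (2 * (ENNReal.ofReal (2 ^ (d + 1)) * pI d))

/-- far constant -/
noncomputable def Bfar (d : ℕ) (ε r₁ : ℝ) (T : ℝ≥0∞) : ℝ≥0∞ :=
  (ENNReal.ofReal ((ε * (r₁ / 20)) ^ d)⁻¹ * T * (om d * T)) ^ (1 / 2 : ℝ)

lemma V_near {d : ℕ} {s : E d → ℝ} (hs : Continuous s) {K : Set (E d)} (hK : IsCompact K) (hKne : K.Nonempty)
    {δ ε : ℝ} (hδ : 0 < δ) (hε : 0 < ε)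
    (hl : ∀ x y, |s x - s y| ≤ (1 / 4) * ‖x - y‖)
    (hlo : ∀ x, ε * (δ + infDist x K) ≤ s x) (hhi : ∀ x, s x ≤ 2 * (δ + infDist x K))
    (m ν : Measure (E d)) [SFinite m] [SFinite ν] (c : ℝ≥0∞) (r₁ : ℝ)
    (hball : ∀ x ∈ K, ∀ r, 0 < r → r < r₁ → m (closedBall x r) ≤ c * ν (closedBall x (3 * r)))
    (y : E d) (hy : 5 * (δ + infDist y K) < r₁) :
    V s m y ≤ Acst d ε * c * ∫⁻ z, pk (δ + infDist y K) (y - z) * V s ν z := by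
  set r := δ + infDist y K with hr
  have hr0 : 0 < r := by have : 0 ≤ infDist y K := infDist_nonneg; positivity
  have hpos : ∀ x, 0 < s x := fun x => lt_of_lt_of_le (by have : 0 ≤ infDist x K := infDist_nonneg; positivity) (hlo x)
  have hcmp : ∀ x, ‖y - x‖ ≤ s x → s y ≤ 2 * s x ∧ s x ≤ 2 * s y := fun x hx => by
    have h1 := abs_le.1 (hl y x)
    have := hpos x
    constructor <;> linarith [h1.1, h1.2]
  have hsy : ε * r ≤ s y := hlo y
  have hsy2 : s y ≤ 2 * r := hhi y
  have h1 : V s m y ≤ ENNReal.ofReal ((ε * r / 2) ^ d)⁻¹ * m (closedBall y (4 * r)) := by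
    refine V_le hs m _ (by positivity) y (fun x hx => ?_) _ measurableSet_closedBall (fun x hx => ?_)
    · linarith [(hcmp x hx).1]
    · rw [mem_closedBall, dist_comm, dist_eq_norm]
      linarith [(hcmp x hx).2]
  obtain ⟨x, hxK, hx⟩ := hK.exists_infDist_eq_dist hKne y
  have hxr : dist y x ≤ r := by rw [← hx]; linarith
  have h2 : m (closedBall y (4 * r)) ≤ c * ν (closedBall y (16 * r)) := by
    calc m (closedBall y (4 * r)) ≤ m (closedBall x (5 * r)) :=
          measure_mono (closedBall_subset_closedBall' (by linarith))
      _ ≤ c * ν (closedBall x (3 * (5 * r))) := hball x hxK _ (by positivity) hy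
      _ ≤ c * ν (closedBall y (16 * r)) := by
          gcongr
          exact closedBall_subset_closedBall' (by rw [dist_comm]; linarith)
  have h3 : ENNReal.ofReal (r ^ d)⁻¹ * ν (closedBall y (16 * r))
      ≤ ENNReal.ofReal (17 ^ (d + 1)) * ∫⁻ x, pk r (y - x) ∂ν := by
    rw [← lintegral_indicator_const measurableSet_closedBall, ← lintegral_const_mul' _ _ ENNReal.ofReal_ne_top]
    refine lintegral_mono fun x => ?_
    by_cases hx : x ∈ closedBall y (16 * r)
    · rw [Set.indicator_of_mem hx]
      have hp0 : pk r (0 : E d) = ENNReal.ofReal (r ^ d)⁻¹ := by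
        unfold pk; congr 1; rw [norm_zero, add_zero, pow_succ]; field_simp
      rw [← hp0]
      refine pk_half' hr0 17 (by norm_num) ?_
      rw [mem_closedBall, dist_comm, dist_eq_norm] at hx
      rw [norm_zero]; linarith
    · rw [Set.indicator_of_notMem hx]; exact zero_le
  have h4 := pk_avg hs hpos ν y hr0 (fun x => by
    refine (hhi x).trans ?_
    have := infDist_le_infDist_add_dist (s := K) (x := x) (y := y)
    rw [dist_comm, dist_eq_norm] at this
    rw [hr]; linarith)
  have h5 : ∫⁻ x, pk r (y - x) ∂ν ≤ (om d)⁻¹ * (ENNReal.ofReal (3 ^ (d + 1)) * ∫⁻ z, pk r (y - z) * V s ν z) := by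
    rw [← ENNReal.div_eq_inv_mul, ENNReal.le_div_iff_mul_le (Or.inl (om_ne_zero d)) (Or.inl (om_ne_top d)), mul_comm]
    exact h4
  have e0 : ENNReal.ofReal ((ε * r / 2) ^ d)⁻¹ = ENNReal.ofReal (2 ^ d * (ε ^ d)⁻¹) * ENNReal.ofReal (r ^ d)⁻¹ := by
    rw [← ENNReal.ofReal_mul (by positivity)]
    congr 1
    rw [div_pow, mul_pow]; field_simp
  calc V s m y ≤ _ := h1
    _ ≤ ENNReal.ofReal ((ε * r / 2) ^ d)⁻¹ * (c * ν (closedBall y (16 * r))) := by gcongr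
    _ = ENNReal.ofReal (2 ^ d * (ε ^ d)⁻¹) * c * (ENNReal.ofReal (r ^ d)⁻¹ * ν (closedBall y (16 * r))) := by
        rw [e0]; ring
    _ ≤ ENNReal.ofReal (2 ^ d * (ε ^ d)⁻¹) * c * (ENNReal.ofReal (17 ^ (d + 1)) *
        ((om d)⁻¹ * (ENNReal.ofReal (3 ^ (d + 1)) * ∫⁻ z, pk r (y - z) * V s ν z))) := by
        refine mul_le_mul_right ?_ _
        exact h3.trans (by gcongr)
    _ = _ := by
        unfold Acst
        rw [ENNReal.ofReal_mul (p := 2 ^ d * (ε ^ d)⁻¹) (by positivity)]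
        ring

lemma V_far {d : ℕ} {s : E d → ℝ} (hs : Continuous s) {K : Set (E d)}
    {δ ε : ℝ} (hδ : 0 < δ) (hε : 0 < ε)
    (hl : ∀ x y, |s x - s y| ≤ (1 / 4) * ‖x - y‖)
    (hlo : ∀ x, ε * (δ + infDist x K) ≤ s x)
    (m : Measure (E d)) (r₁ : ℝ) (hr₁ : 0 < r₁)
    (y : E d) (hy : r₁ ≤ 5 * (δ + infDist y K)) :
    V s m y ≤ ENNReal.ofReal ((ε * (r₁ / 20)) ^ d)⁻¹ * m Set.univ := by
  have hpos : ∀ x, 0 < s x := fun x => lt_of_lt_of_le (by have : 0 ≤ infDist x K := infDist_nonneg; positivity) (hlo x)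
  refine V_le hs m _ (by positivity) y (fun x hx => ?_) _ MeasurableSet.univ (fun x hx => trivial)
  have h1 := abs_le.1 (hl y x)
  have := hpos x
  have h2 : s y ≤ 2 * s x := by linarith [h1.1, h1.2]
  have := hlo y
  nlinarith

lemma W_bound {d : ℕ} {s : E d → ℝ} (hs : Continuous s) {K : Set (E d)} (hK : IsCompact K) (hKne : K.Nonempty)
    {δ ε : ℝ} (hδ : 0 < δ) (hε : 0 < ε)
    (hl : ∀ x y, |s x - s y| ≤ (1 / 4) * ‖x - y‖)
    (hlo : ∀ x, ε * (δ + infDist x K) ≤ s x) (hhi : ∀ x, s x ≤ 2 * (δ + infDist x K))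
    (m ν : Measure (E d)) [SFinite m] [SFinite ν] (c : ℝ≥0∞) (r₁ : ℝ) (hr₁ : 0 < r₁)
    (hball : ∀ x ∈ K, ∀ r, 0 < r → r < r₁ → m (closedBall x r) ≤ c * ν (closedBall x (3 * r)))
    {W : E d → ℝ≥0∞} (hW : Measurable W) (hWi : ∫⁻ y, W y ≠ ∞) :
    ∫⁻ y, W y * V s m y ≤ (Atot d ε * c * eLpNorm (V s ν) 2 volume + Bfar d ε r₁ (m Set.univ)) * eLpNorm W 2 volume := by
  set r : E d → ℝ := fun y => δ + infDist y K with hr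
  have hrm : Measurable r := by simp only [hr]; fun_prop
  have hpos : ∀ x, 0 < s x := fun x => lt_of_lt_of_le (by have : 0 ≤ infDist x K := infDist_nonneg; positivity) (hlo x)
  set far : Set (E d) := {y | r₁ ≤ 5 * r y} with hfar
  have hfm : MeasurableSet far := measurableSet_le measurable_const (by fun_prop)
  have hVm := V_meas hs m
  have hVn := V_meas hs ν
  set G : E d → ℝ≥0∞ := far.indicator (V s m) with hG
  have hGm : Measurable G := hVm.indicator hfm
  set P : E d → ℝ≥0∞ := fun y => ∫⁻ z, pk (r y) (y - z) * V s ν z with hP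
  have hPm : Measurable P := by
    refine Measurable.lintegral_prod_right' (f := fun q : E d × E d => pk (r q.1) (q.1 - q.2) * V s ν q.2) ?_
    exact Measurable.fun_mul (pk_meas' (by fun_prop) (by fun_prop)) (by fun_prop)
  have h1 : ∀ y, W y * V s m y ≤ Acst d ε * c * (W y * P y) + W y * G y := fun y => by
    by_cases hy : y ∈ far
    · rw [hG, Set.indicator_of_mem hy]; exact le_add_self
    · refine le_trans ?_ le_self_add
      have := V_near hs hK hKne hδ hε hl hlo hhi m ν c r₁ hball y (by simpa [hfar, hr] using hy)
      calc _ ≤ W y * (Acst d ε * c * P y) := by gcongr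
        _ = _ := by ring
  have hG2 : eLpNorm G 2 volume ≤ Bfar d ε r₁ (m Set.univ) := by
    set Bs := ENNReal.ofReal ((ε * (r₁ / 20)) ^ d)⁻¹ * m Set.univ with hBs
    have : ∫⁻ y, G y * G y ≤ Bs * (om d * m Set.univ) := by
      rw [← lintegral_V_one hs hpos m, ← lintegral_const_mul _ hVm]
      refine lintegral_mono fun y => ?_
      by_cases hy : y ∈ far
      · rw [hG, Set.indicator_of_mem hy]
        gcongr
        exact V_far hs hδ hε hl hlo m r₁ hr₁ y hy
      · rw [hG, Set.indicator_of_notMem hy]; simp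
    rw [eLpNorm_eq_lintegral_rpow_enorm_toReal (by simp) (by simp)]
    unfold Bfar
    simp only [enorm_eq_self, ENNReal.toReal_ofNat]
    gcongr
    refine le_trans (le_of_eq ?_) this
    refine lintegral_congr fun y => ?_
    rw [ENNReal.rpow_two, sq]
  calc ∫⁻ y, W y * V s m y ≤ ∫⁻ y, (Acst d ε * c * (W y * P y) + W y * G y) := lintegral_mono h1
    _ = (Acst d ε * c * ∫⁻ y, W y * P y) + ∫⁻ y, W y * G y := by
        rw [lintegral_add_left (by fun_prop), lintegral_const_mul _ (by fun_prop)]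
    _ ≤ Acst d ε * c * (2 * (ENNReal.ofReal (2 ^ (d + 1)) * pI d) * eLpNorm (V s ν) 2 volume * eLpNorm W 2 volume)
        + eLpNorm W 2 volume * Bfar d ε r₁ (m Set.univ) := by
        gcongr
        · exact kernel_bound hδ (fun y => by have : 0 ≤ infDist y K := infDist_nonneg; simp only [hr]; linarith) hrm hW hWi hVn
        · exact (cs_eLpNorm hW.aemeasurable hGm.aemeasurable).trans (by gcongr)
    _ = _ := by unfold Atot; ring

end DPR
end

section
open MeasureTheory Metric
open scoped RealInnerProductSpace ENNReal NNReal SchwartzMap LineDeriv Laplacian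

namespace DPR

/-- basis vectors -/
noncomputable def eb {d : ℕ} (i : Fin d) : E d := EuclideanSpace.single i 1

lemma norm_eb {d : ℕ} (i : Fin d) : ‖(eb i : E d)‖ = 1 := by simp [eb]

/-- sum of second derivatives -/
noncomputable def W2 {d : ℕ} (u : 𝓢(E d, ℂ)) (y : E d) : ℝ≥0∞ :=
  ∑ i : Fin d, ∑ j : Fin d, ‖(∂_{eb i} (∂_{eb j} u) : 𝓢(E d, ℂ)) y‖ₑ

/-- sum of first derivatives -/
noncomputable def W1 {d : ℕ} (u : 𝓢(E d, ℂ)) (y : E d) : ℝ≥0∞ :=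
  ∑ i : Fin d, ‖(∂_{eb i} u : 𝓢(E d, ℂ)) y‖ₑ

lemma W2_meas {d : ℕ} (u : 𝓢(E d, ℂ)) : Measurable (W2 u) := by
  unfold W2
  refine Finset.measurable_fun_sum _ fun i _ => Finset.measurable_fun_sum _ fun j _ => ?_
  exact (SchwartzMap.continuous _).measurable.enorm

lemma W1_meas {d : ℕ} (u : 𝓢(E d, ℂ)) : Measurable (W1 u) := by
  unfold W1
  refine Finset.measurable_fun_sum _ fun i _ => ?_
  exact (SchwartzMap.continuous _).measurable.enorm

lemma W2_int {d : ℕ} (u : 𝓢(E d, ℂ)) : ∫⁻ y, W2 u y ≠ ∞ := by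
  unfold W2
  rw [lintegral_finsetSum _ fun i _ => Finset.measurable_fun_sum _ fun j _ => (SchwartzMap.continuous _).measurable.enorm]
  refine ENNReal.sum_ne_top.2 fun i _ => ?_
  rw [lintegral_finsetSum _ fun i _ => (SchwartzMap.continuous _).measurable.enorm]
  exact ENNReal.sum_ne_top.2 fun j _ => (SchwartzMap.integrable _).2.ne

lemma W1_int {d : ℕ} (u : 𝓢(E d, ℂ)) : ∫⁻ y, W1 u y ≠ ∞ := by
  unfold W1
  rw [lintegral_finsetSum _ fun i _ => (SchwartzMap.continuous _).measurable.enorm]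
  exact ENNReal.sum_ne_top.2 fun j _ => (SchwartzMap.integrable _).2.ne

lemma W1_norm {d : ℕ} (u : 𝓢(E d, ℂ)) (B : ℝ≥0∞)
    (h : ∀ e : E d, ‖e‖ = 1 → eLpNorm ⇑(∂_{e} u : 𝓢(E d, ℂ)) 2 volume ≤ B) :
    eLpNorm (W1 u) 2 volume ≤ d * B := by
  have e : W1 u = ∑ i : Fin d, fun y => ‖(∂_{eb i} u : 𝓢(E d, ℂ)) y‖ₑ := by
    funext y; simp [W1]
  rw [e]
  refine (eLpNorm_sum_le (fun i _ => ((SchwartzMap.continuous _).measurable.enorm).aestronglyMeasurable) (by norm_num)).trans ?_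
  refine (Finset.sum_le_sum fun i _ => (eLpNorm_enorm _).trans_le (h _ (norm_eb i))).trans ?_
  simp

lemma W2_norm {d : ℕ} (u : 𝓢(E d, ℂ)) (B : ℝ≥0∞)
    (h : ∀ e e' : E d, ‖e‖ = 1 → ‖e'‖ = 1 → eLpNorm ⇑(∂_{e} (∂_{e'} u) : 𝓢(E d, ℂ)) 2 volume ≤ B) :
    eLpNorm (W2 u) 2 volume ≤ d * (d * B) := by
  have e : W2 u = ∑ i : Fin d, ∑ j : Fin d, fun y => ‖(∂_{eb i} (∂_{eb j} u) : 𝓢(E d, ℂ)) y‖ₑ := by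
    funext y; simp [W2]
  have hm : ∀ i j : Fin d, AEStronglyMeasurable (fun y => ‖(∂_{eb i} (∂_{eb j} u) : 𝓢(E d, ℂ)) y‖ₑ) volume :=
    fun i j => ((SchwartzMap.continuous _).measurable.enorm).aestronglyMeasurable
  rw [e]
  refine (eLpNorm_sum_le (fun i _ => ?_) (by norm_num)).trans ?_
  · exact Finset.aestronglyMeasurable_sum _ fun j _ => hm i j
  refine (Finset.sum_le_sum fun i _ => (eLpNorm_sum_le (fun j _ => hm i j) (by norm_num)).trans
    (Finset.sum_le_sum fun j _ => (eLpNorm_enorm _).trans_le (h _ _ (norm_eb i) (norm_eb j)))).trans ?_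
  simp

lemma V_lt_top {d : ℕ} {s : E d → ℝ} (t : ℝ) (ht : 0 < t) (hst : ∀ x, t ≤ s x) (hs : Continuous s)
    (ν : Measure (E d)) (y : E d) :
    V s ν y ≤ ENNReal.ofReal (t ^ d)⁻¹ * ν Set.univ :=
  V_le hs ν t ht y (fun x _ => hst x) _ MeasurableSet.univ (fun _ _ => trivial)

lemma V_L2 {d : ℕ} {s : E d → ℝ} (t : ℝ) (ht : 0 < t) (hst : ∀ x, t ≤ s x) (hs : Continuous s)
    (ν : Measure (E d)) [IsFiniteMeasure ν] : eLpNorm (V s ν) 2 volume ≠ ∞ := by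
  intro h
  have h1 := eLpNorm_sq (μ := volume) (V s ν)
  have h2 : ∫⁻ y, V s ν y * V s ν y ≤ (ENNReal.ofReal (t ^ d)⁻¹ * ν Set.univ) * (om d * ν Set.univ) := by
    rw [← lintegral_V_one hs (fun x => ht.trans_le (hst x)) ν, ← lintegral_const_mul _ (V_meas hs ν)]
    exact lintegral_mono fun y => by gcongr; exact V_lt_top t ht hst hs ν y
  rw [h, ENNReal.top_mul_top] at h1
  rw [← h1, top_le_iff] at h2
  exact absurd h2 (ENNReal.mul_ne_top (ENNReal.mul_ne_top ENNReal.ofReal_ne_top (measure_ne_top _ _))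
    (ENNReal.mul_ne_top (om_ne_top d) (measure_ne_top _ _)))

lemma pairing {d : ℕ} {s : E d → ℝ} (t : ℝ) (ht : 0 < t) (hst : ∀ x, t ≤ s x) (hs : Continuous s)
    (ν : Measure (E d)) [IsFiniteMeasure ν] {F : E d → ℝ} (hF : Continuous F) (C : ℝ) (hFC : ∀ x, ‖F x‖ ≤ C) :
    ∫ y, (V s ν y).toReal * F y = ∫ z in closedBall (0 : E d) 1, ∫ x, F (x + s x • z) ∂ν := by
  have hPm : Measurable (Phi s) := by unfold Phi; fun_prop
  have h := congrArg (fun M : Measure (E d) => ∫ y, F y ∂M) (map_Phi hs (fun x => ht.trans_le (hst x)) ν)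
  have hfin : IsFiniteMeasure ((volume : Measure (E d)).restrict (closedBall (0 : E d) 1)) :=
    ⟨by rw [Measure.restrict_apply_univ]; exact measure_closedBall_lt_top⟩
  have hlt : ∀ᵐ y ∂(volume : Measure (E d)), V s ν y < ∞ := Filter.Eventually.of_forall fun y =>
    (V_lt_top t ht hst hs ν y).trans_lt (ENNReal.mul_lt_top ENNReal.ofReal_lt_top (measure_lt_top _ _))
  rw [integral_map hPm.aemeasurable hF.aestronglyMeasurable,
    integral_withDensity_eq_integral_toReal_smul (V_meas hs ν) hlt, integral_prod] at h
  · exact h.symm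
  · refine Integrable.of_bound (C := C) ?_ (Filter.Eventually.of_forall fun q => hFC _)
    exact (hF.measurable.comp hPm).aestronglyMeasurable

end DPR
end

section
open MeasureTheory Metric
open scoped RealInnerProductSpace ENNReal NNReal SchwartzMap LineDeriv Laplacian

namespace DPR

lemma absorb {X c : ℝ≥0∞} (hX : X ≠ ∞) (hc : c ≠ ∞)
    (h : X * X ≤ X * (ENNReal.ofReal (1/4) * X) + (c + ENNReal.ofReal (1/4) * X) * (ENNReal.ofReal (5/4) * X)) :
    X ≤ 4 * c := by
  lift X to ℝ≥0 using hX
  lift c to ℝ≥0 using hc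
  have e1 : ENNReal.ofReal (1/4) = ((1/4 : ℝ≥0) : ℝ≥0∞) := by
    rw [ENNReal.ofReal]; congr 1; ext; simp
  have e2 : ENNReal.ofReal (5/4) = ((5/4 : ℝ≥0) : ℝ≥0∞) := by
    rw [ENNReal.ofReal]; congr 1; ext; simp; norm_num
  rw [e1, e2] at h
  norm_cast at h ⊢
  rw [← NNReal.coe_le_coe] at h ⊢
  push_cast at h ⊢
  have hx := X.coe_nonneg
  have hc := c.coe_nonneg
  by_contra hcon
  push Not at hcon
  have : (0:ℝ) < X := by linarith
  nlinarith

lemma close1 {d : ℕ} {s : E d → ℝ} (t : ℝ) (ht : 0 < t) (hst : ∀ x, t ≤ s x) (hs : Continuous s)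
    (ν : Measure (E d)) [IsFiniteMeasure ν] (c : ℝ≥0∞) (hc : c ≠ ∞)
    (hg : ∀ g : 𝓢(E d, ℂ), ‖∫ y, (V s ν y).toReal * (g y).re‖ₑ ≤
      (c + ENNReal.ofReal (1/4) * eLpNorm (V s ν) 2 volume) * eLpNorm g 2 volume) :
    eLpNorm (V s ν) 2 volume ≤ 4 * c := by
  have hXfin := V_L2 t ht hst hs ν
  set X := eLpNorm (V s ν) 2 volume with hX
  by_cases hX0 : X = 0
  · rw [hX0]; exact zero_le
  have hVm := V_meas hs ν
  have hVfin : ∀ y, V s ν y ≠ ∞ := fun y => ne_of_lt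
    ((V_lt_top t ht hst hs ν y).trans_lt (ENNReal.mul_lt_top ENNReal.ofReal_lt_top (measure_lt_top _ _)))
  set f : E d → ℝ := fun y => (V s ν y).toReal with hf
  have hfm : Measurable f := hVm.ennreal_toReal
  have hfe : ∀ y, ‖f y‖ₑ = V s ν y := fun y => by
    rw [hf, Real.enorm_eq_ofReal ENNReal.toReal_nonneg, ENNReal.ofReal_toReal (hVfin y)]
  have hfX : eLpNorm f 2 volume = X := by
    rw [hX, ← eLpNorm_enorm f]; simp_rw [hfe]
  have hfL : MemLp f 2 volume := ⟨hfm.aestronglyMeasurable, by rw [hfX]; exact hXfin.lt_top⟩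
  have hfCL : MemLp (fun y => (f y : ℂ)) 2 volume := hfL.ofReal
  have hx0 : 0 < X.toReal / 4 := by
    have := ENNReal.toReal_pos hX0 hXfin; positivity
  obtain ⟨g₀, hg₁, hg₂, hg₃⟩ := MemLp.exist_eLpNorm_sub_le (by simp) (by norm_num) hfCL hx0
  set g : 𝓢(E d, ℂ) := hg₁.toSchwartzMap hg₂ with hgdef
  have hgg : ∀ y, g y = g₀ y := fun y => rfl
  have hdiff : eLpNorm ((fun y => (f y : ℂ)) - ⇑g) 2 volume ≤ ENNReal.ofReal (1/4) * X := by
    refine hg₃.trans_eq ?_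
    rw [div_eq_inv_mul, ENNReal.ofReal_mul (by norm_num), ENNReal.ofReal_toReal hXfin, one_div]
  have hgL : MemLp g 2 volume := g.memLp 2 volume
  have hgX : eLpNorm g 2 volume ≤ ENNReal.ofReal (5/4) * X := by
    have e : ⇑g = (fun y => (f y : ℂ)) - ((fun y => (f y : ℂ)) - ⇑g) := by simp
    rw [e]
    refine (eLpNorm_sub_le hfCL.1 (hfCL.1.sub hgL.1) (by norm_num)).trans ?_
    have e2 : eLpNorm (fun y => (f y : ℂ)) 2 volume = X := by
      rw [← hfX]
      exact eLpNorm_congr_norm_ae (Filter.Eventually.of_forall fun y => by simp)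
    rw [e2]
    refine (add_le_add le_rfl hdiff).trans_eq ?_
    rw [show (5/4 : ℝ) = 1 + 1/4 by norm_num, ENNReal.ofReal_add (by norm_num) (by norm_num)]
    simp [add_mul]
  have hgr : MemLp (fun y => (g y).re) 2 volume := hgL.re
  have hi1 : Integrable (fun y => f y * (f y - (g y).re)) := hfL.integrable_mul (hfL.sub hgr)
  have hi2 : Integrable (fun y => f y * (g y).re) := hfL.integrable_mul hgr
  have hi3 : Integrable (fun y => f y * f y) := hfL.integrable_mul hfL
  refine absorb hXfin hc ?_
  have h1 : X * X = ENNReal.ofReal (∫ y, f y * f y) := by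
    rw [ofReal_integral_eq_lintegral_ofReal hi3 (Filter.Eventually.of_forall fun y => mul_self_nonneg _), hX, eLpNorm_sq]
    refine lintegral_congr fun y => ?_
    rw [hf, ENNReal.ofReal_mul ENNReal.toReal_nonneg, ENNReal.ofReal_toReal (hVfin y)]
  have h2 : ∫ y, f y * f y = (∫ y, f y * (f y - (g y).re)) + ∫ y, f y * (g y).re := by
    rw [← integral_add hi1 hi2]
    congr 1; funext y; ring
  have h3 : ‖∫ y, f y * (f y - (g y).re)‖ₑ ≤ X * (ENNReal.ofReal (1/4) * X) := by
    refine (enorm_integral_le_lintegral_enorm _).trans ?_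
    simp_rw [enorm_mul, hfe]
    refine (cs_eLpNorm hVm.aemeasurable (by fun_prop)).trans ?_
    gcongr
    rw [eLpNorm_enorm]
    refine le_trans (eLpNorm_mono fun y => ?_) hdiff
    have : f y - (g y).re = ((f y : ℂ) - g y).re := by simp
    rw [this, Real.norm_eq_abs]
    exact Complex.abs_re_le_norm _
  rw [h1, h2]
  calc ENNReal.ofReal _ ≤ ‖(∫ y, f y * (f y - (g y).re)) + ∫ y, f y * (g y).re‖ₑ := Real.ofReal_le_enorm _
    _ ≤ _ := enorm_add_le _ _
    _ ≤ _ := by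
      gcongr
      exact (hg g).trans (by gcongr)

/-- The key inequality. -/
def Key {d : ℕ} (Ca : ℝ≥0∞) (ε : ℝ) (ν lb Sg : Measure (E d)) : Prop :=
  ∀ (u : 𝓢(E d, ℂ)) (s : E d → ℝ), ContDiff ℝ 1 s → (∀ x, ‖fderiv ℝ s x‖ ≤ ε) → ∀ z : E d, ‖z‖ ≤ 1 →
    ‖∫ x, ((Δ u : 𝓢(E d, ℂ)) (x + s x • z)).re ∂ν‖ₑ ≤
      Ca * (ENNReal.ofReal ε * ∫⁻ x, W2 u (x + s x • z) ∂ν + ∫⁻ x, W2 u (x + s x • z) ∂lb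
        + ∫⁻ x, W1 u (x + s x • z) ∂Sg)

lemma close2 {d : ℕ} {s : E d → ℝ} (t : ℝ) (ht : 0 < t) (hst : ∀ x, t ≤ s x) (hs : ContDiff ℝ 1 s)
    {ε : ℝ} (hsε : ∀ x, ‖fderiv ℝ s x‖ ≤ ε) (Ca : ℝ≥0∞)
    (ν lb Sg : Measure (E d)) [IsFiniteMeasure ν] [IsFiniteMeasure lb] [IsFiniteMeasure Sg]
    (hkey : Key Ca ε ν lb Sg) (u h g : 𝓢(E d, ℂ)) (hgu : g = h - Δ u) (H : ℝ≥0∞) (hh : ∀ x, ‖h x‖ₑ ≤ H) :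
    ‖∫ y, (V s ν y).toReal * (g y).re‖ₑ ≤ H * (om d * ν Set.univ) +
      Ca * (ENNReal.ofReal ε * (∫⁻ y, W2 u y * V s ν y) + (∫⁻ y, W2 u y * V s lb y) + ∫⁻ y, W1 u y * V s Sg y) := by
  have hsc := hs.continuous
  have hpos : ∀ x, 0 < s x := fun x => ht.trans_le (hst x)
  have hVm := V_meas hsc ν
  have hVfin : ∀ y, V s ν y ≠ ∞ := fun y => ne_of_lt
    ((V_lt_top t ht hst hsc ν y).trans_lt (ENNReal.mul_lt_top ENNReal.ofReal_lt_top (measure_lt_top _ _)))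
  have hVi : ∫⁻ y, V s ν y ≠ ∞ := by
    rw [lintegral_V_one hsc hpos]
    exact ENNReal.mul_ne_top (om_ne_top d) (measure_ne_top _ _)
  have hfe : ∀ y, ‖(V s ν y).toReal‖ₑ = V s ν y := fun y => by
    rw [Real.enorm_eq_ofReal ENNReal.toReal_nonneg, ENNReal.ofReal_toReal (hVfin y)]
  have hfi : Integrable (fun y => (V s ν y).toReal) := integrable_toReal_of_lintegral_ne_top hVm.aemeasurable hVi
  have hbd : ∀ w : 𝓢(E d, ℂ), ∃ C : ℝ, ∀ x, ‖(w x).re‖ ≤ C := fun w => by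
    refine ⟨‖w.toBoundedContinuousFunction‖, fun x => ?_⟩
    exact (Complex.abs_re_le_norm _).trans (w.toBoundedContinuousFunction.norm_coe_le_norm x)
  have hcont : ∀ w : 𝓢(E d, ℂ), Continuous fun x => (w x).re := fun w =>
    Complex.continuous_re.comp w.continuous
  have hI : ∀ w : 𝓢(E d, ℂ), Integrable (fun y => (V s ν y).toReal * (w y).re) := fun w => by
    obtain ⟨C, hC⟩ := hbd w
    exact hfi.mul_bdd (hcont w).aestronglyMeasurable (Filter.Eventually.of_forall hC)
  have e1 : ∫ y, (V s ν y).toReal * (g y).re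
      = (∫ y, (V s ν y).toReal * (h y).re) - ∫ y, (V s ν y).toReal * ((Δ u : 𝓢(E d, ℂ)) y).re := by
    rw [← integral_sub (hI h) (hI _)]
    congr 1; funext y
    rw [hgu, sub_apply, Complex.sub_re]; ring
  rw [e1]
  refine enorm_sub_le.trans (add_le_add ?_ ?_)
  · refine (enorm_integral_le_lintegral_enorm _).trans ?_
    rw [← lintegral_V_one hsc hpos, ← lintegral_const_mul _ hVm]
    refine lintegral_mono fun y => ?_
    rw [enorm_mul, hfe, mul_comm]
    gcongr
    refine le_trans ?_ (hh y)
    rw [← ofReal_norm, ← ofReal_norm]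
    exact ENNReal.ofReal_le_ofReal (Complex.abs_re_le_norm _)
  · obtain ⟨C, hC⟩ := hbd (Δ u)
    rw [pairing t ht hst hsc ν (hcont _) C hC]
    refine (enorm_integral_le_lintegral_enorm _).trans ?_
    refine (setLIntegral_mono' measurableSet_closedBall fun z hz =>
      hkey u s hs hsε z (by simpa using hz)).trans ?_
    have hW2 := W2_meas u
    have hW1 := W1_meas u
    rw [← lintegral_V hsc hpos ν hW2, ← lintegral_V hsc hpos lb hW2, ← lintegral_V hsc hpos Sg hW1]
    have hm : ∀ (F : E d → ℝ≥0∞) (m : Measure (E d)), SFinite m → Measurable F →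
        Measurable fun z : E d => ∫⁻ x, F (x + s x • z) ∂m := fun F m _ hF => by
      refine Measurable.lintegral_prod_right' (f := fun q : E d × E d => F (q.2 + s q.2 • q.1)) ?_
      fun_prop
    have m1 := hm _ ν inferInstance hW2
    have m2 := hm _ lb inferInstance hW2
    have m3 := hm _ Sg inferInstance hW1
    rw [lintegral_const_mul _ (by fun_prop), lintegral_add_left (by fun_prop), lintegral_add_left (by fun_prop),
      lintegral_const_mul _ (by fun_prop)]

lemma small_choice (M : ℝ≥0∞) (hM : M ≠ ∞) : ∃ t : ℝ, 0 < t ∧ t ≤ 1 / 4 ∧ M * ENNReal.ofReal t ≤ ENNReal.ofReal (1 / 12) := by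
  have hM0 : 0 ≤ M.toReal := ENNReal.toReal_nonneg
  refine ⟨min (1 / 4) (1 / (12 * (M.toReal + 1))), by positivity, min_le_left _ _, ?_⟩
  have hMt : ∀ t : ℝ, M * ENNReal.ofReal t = ENNReal.ofReal (M.toReal * t) := fun t => by
    rw [ENNReal.ofReal_mul hM0, ENNReal.ofReal_toReal hM]
  rw [hMt]
  apply ENNReal.ofReal_le_ofReal
  calc M.toReal * min (1 / 4) (1 / (12 * (M.toReal + 1))) ≤ M.toReal * (1 / (12 * (M.toReal + 1))) := by
        gcongr; exact min_le_right _ _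
    _ ≤ 1 / 12 := by
        rw [mul_one_div, div_le_div_iff₀ (by positivity) (by norm_num)]; linarith

lemma Atot_ne_top (d : ℕ) (ε : ℝ) : Atot d ε ≠ ∞ := by
  unfold Atot Acst
  have := ENNReal.inv_ne_top.2 (om_ne_zero d)
  have := pI_ne_top d
  exact ENNReal.mul_ne_top (ENNReal.mul_ne_top (by simp) (ENNReal.mul_ne_top (by assumption) (by simp)))
    (ENNReal.mul_ne_top (by simp) (ENNReal.mul_ne_top (by simp) this))

lemma Bfar_ne_top (d : ℕ) (ε r₁ : ℝ) (T : ℝ≥0∞) (hT : T ≠ ∞) : Bfar d ε r₁ T ≠ ∞ := by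
  unfold Bfar
  refine ENNReal.rpow_ne_top_of_nonneg (by norm_num) ?_
  exact ENNReal.mul_ne_top (ENNReal.mul_ne_top (by simp) hT) (ENNReal.mul_ne_top (om_ne_top d) hT)

lemma K_bound {d : ℕ} {s : E d → ℝ} (hs : Continuous s) (hpos : ∀ x, 0 < s x) (K : Set (E d)) (hK : MeasurableSet K)
    (ν : Measure (E d)) [SFinite ν] (η : ℝ) (hη : ∀ x ∈ K, s x ≤ η) :
    om d * ν K ≤ eLpNorm (V s ν) 2 volume * (volume (cthickening η K)) ^ (1 / 2 : ℝ) := by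
  set T := cthickening η K with hT
  have hTm : MeasurableSet T := isClosed_cthickening.measurableSet
  set F : E d → ℝ≥0∞ := T.indicator (fun _ => 1) with hF
  have hFm : Measurable F := measurable_const.indicator hTm
  have h1 : om d * ν K ≤ ∫⁻ y, F y * V s ν y := by
    rw [← lintegral_V hs hpos ν hFm]
    have : om d * ν K = ∫⁻ z in closedBall (0 : E d) 1, ν K := by
      rw [lintegral_const, Measure.restrict_apply_univ, mul_comm]; rfl
    rw [this]
    refine setLIntegral_mono' measurableSet_closedBall fun z hz => ?_
    rw [← lintegral_indicator_one hK]
    refine lintegral_mono fun x => ?_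
    by_cases hx : x ∈ K
    · have : x + s x • z ∈ T := by
        refine mem_cthickening_of_dist_le _ x _ _ hx ?_
        have hz1 : ‖z‖ ≤ 1 := by simpa using hz
        rw [dist_eq_norm, add_sub_cancel_left, norm_smul, Real.norm_of_nonneg (hpos x).le]
        nlinarith [hpos x, hη x hx]
      rw [hF, Set.indicator_of_mem hx, Set.indicator_of_mem this]; simp
    · rw [Set.indicator_of_notMem hx]; exact zero_le
  refine h1.trans ((cs_eLpNorm hFm.aemeasurable (V_meas hs ν).aemeasurable).trans_eq ?_)
  rw [mul_comm]
  congr 1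
  rw [hF, eLpNorm_indicator_const hTm (by simp) (by simp)]
  simp

theorem core {d : ℕ} (Ca : ℝ≥0∞) (hCa : Ca ≠ ∞) : ∃ ε : ℝ, 0 < ε ∧ ε ≤ 1 / 4 ∧ ∃ ε' : ℝ, 0 < ε' ∧
    ∀ (ν lb Sg : Measure (E d)) [IsFiniteMeasure ν] [IsFiniteMeasure lb] [IsFiniteMeasure Sg]
      (K : Set (E d)) (r₁ : ℝ) (L : ℝ≥0∞), IsCompact K → K.Nonempty → volume K = 0 → 0 < r₁ → L ≠ ∞ →
      (∀ x ∈ K, ∀ r, 0 < r → r < r₁ → lb (closedBall x r) ≤ ENNReal.ofReal ε' * ν (closedBall x (3 * r))) →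
      (∀ x ∈ K, ∀ r, 0 < r → r < r₁ → Sg (closedBall x r) ≤ L * ν (closedBall x (3 * r))) →
      Key Ca ε ν lb Sg → ν K = 0 := by
  set D2 : ℝ≥0∞ := d * (d * ENNReal.ofReal (d + 1)) with hD2
  set D1 : ℝ≥0∞ := d * ENNReal.ofReal (d + 1) with hD1
  have hD1t : D1 ≠ ∞ := ENNReal.mul_ne_top (by simp) (by simp)
  have hD2t : D2 ≠ ∞ := ENNReal.mul_ne_top (by simp) hD1t
  obtain ⟨ε, hε, hε4, hεs⟩ := small_choice (Ca * D2) (ENNReal.mul_ne_top hCa hD2t)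
  have hAt := Atot_ne_top d ε
  obtain ⟨ε', hε', -, hε's⟩ := small_choice (Ca * D2 * Atot d ε) (ENNReal.mul_ne_top (ENNReal.mul_ne_top hCa hD2t) hAt)
  refine ⟨ε, hε, hε4, ε', hε', fun ν lb Sg _ _ _ K r₁ L hK hKne hK0 hr₁ hL hlb hSg hkey => ?_⟩
  obtain ⟨τ', hτ', -, hτs⟩ := small_choice (Ca * D1 * Atot d ε * L)
    (ENNReal.mul_ne_top (ENNReal.mul_ne_top (ENNReal.mul_ne_top hCa hD1t) hAt) hL)
  obtain ⟨Cτ, hCτ, hsplit⟩ := fourier_split (d := d) (τ' ^ 2) (by positivity)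
  rw [Real.sqrt_sq hτ'.le] at hsplit
  set Bl := Bfar d ε r₁ (lb Set.univ) with hBl
  set BS := Bfar d ε r₁ (Sg Set.univ) with hBS
  set c := Cτ * (om d * ν Set.univ) + Ca * (Bl * D2 + BS * (D1 * ENNReal.ofReal τ')) with hc
  have hct : c ≠ ∞ := by
    refine ENNReal.add_ne_top.2 ⟨ENNReal.mul_ne_top hCτ (ENNReal.mul_ne_top (om_ne_top d) (measure_ne_top _ _)),
      ENNReal.mul_ne_top hCa (ENNReal.add_ne_top.2 ⟨ENNReal.mul_ne_top (Bfar_ne_top _ _ _ _ (measure_ne_top _ _)) hD2t,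
        ENNReal.mul_ne_top (Bfar_ne_top _ _ _ _ (measure_ne_top _ _)) (ENNReal.mul_ne_top hD1t (by simp))⟩)⟩
  have main : ∀ δ : ℝ, 0 < δ → om d * ν K ≤ 4 * c * (volume (cthickening (2 * δ) K)) ^ (1 / 2 : ℝ) := by
    intro δ hδ
    obtain ⟨s, hs1, hs2, hs3, hs4, hs5⟩ := exists_s K hδ hε hε4
    have hsc := hs1.continuous
    have hst : ∀ x, ε * δ ≤ s x := fun x => by
      have : 0 ≤ infDist x K := infDist_nonneg
      refine le_trans ?_ (hs4 x)
      gcongr; linarith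
    have ht : 0 < ε * δ := by positivity
    have hl : ∀ x y, |s x - s y| ≤ (1 / 4) * ‖x - y‖ := fun x y => (hs3 x y).trans (by gcongr)
    set X := eLpNorm (V s ν) 2 volume with hX
    have hX4 : X ≤ 4 * c := by
      refine close1 (ε * δ) ht hst hsc ν c hct fun g => ?_
      obtain ⟨u, h, hgu, hh, hu2, hu1⟩ := hsplit g
      set G := eLpNorm g 2 volume with hG
      have n2 : eLpNorm (W2 u) 2 volume ≤ D2 * G := by
        refine (W2_norm u _ hu2).trans_eq ?_
        rw [hD2]; ring
      have n1 : eLpNorm (W1 u) 2 volume ≤ D1 * ENNReal.ofReal τ' * G := by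
        refine (W1_norm u _ hu1).trans_eq ?_
        rw [hD1, ENNReal.ofReal_mul (by positivity)]; ring
      have b1 : ∫⁻ y, W2 u y * V s ν y ≤ X * (D2 * G) := by
        refine (cs_eLpNorm (W2_meas u).aemeasurable (V_meas hsc ν).aemeasurable).trans ?_
        rw [mul_comm]; gcongr
      have b2 : ∫⁻ y, W2 u y * V s lb y ≤ (Atot d ε * ENNReal.ofReal ε' * X + Bl) * (D2 * G) := by
        refine (W_bound hsc hK hKne hδ hε hl hs4 hs5 lb ν _ r₁ hr₁ hlb (W2_meas u) (W2_int u)).trans ?_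
        gcongr
      have b3 : ∫⁻ y, W1 u y * V s Sg y ≤ (Atot d ε * L * X + BS) * (D1 * ENNReal.ofReal τ' * G) := by
        refine (W_bound hsc hK hKne hδ hε hl hs4 hs5 Sg ν _ r₁ hr₁ hSg (W1_meas u) (W1_int u)).trans ?_
        gcongr
      calc _ ≤ _ := close2 (ε * δ) ht hst hs1 hs2 Ca ν lb Sg hkey u h g hgu _ hh
        _ ≤ Cτ * G * (om d * ν Set.univ) + Ca * (ENNReal.ofReal ε * (X * (D2 * G))
            + (Atot d ε * ENNReal.ofReal ε' * X + Bl) * (D2 * G)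
            + (Atot d ε * L * X + BS) * (D1 * ENNReal.ofReal τ' * G)) := by gcongr
        _ = (c + (Ca * D2 * ENNReal.ofReal ε + Ca * D2 * Atot d ε * ENNReal.ofReal ε'
            + Ca * D1 * Atot d ε * L * ENNReal.ofReal τ') * X) * G := by rw [hc]; ring
        _ ≤ (c + (ENNReal.ofReal (1/12) + ENNReal.ofReal (1/12) + ENNReal.ofReal (1/12)) * X) * G := by gcongr
        _ = _ := by
          rw [← ENNReal.ofReal_add (by norm_num) (by norm_num), ← ENNReal.ofReal_add (by norm_num) (by norm_num)]
          norm_num [hX]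
    refine (K_bound hsc (fun x => ht.trans_le (hst x)) K hK.measurableSet ν (2 * δ) fun x hx => ?_).trans ?_
    · have := hs5 x
      rwa [infDist_zero_of_mem hx, add_zero] at this
    · gcongr
  have hlim : Filter.Tendsto (fun n : ℕ => 4 * c * (volume (cthickening (2 * (1 / ((n : ℝ) + 1))) K)) ^ (1 / 2 : ℝ))
      Filter.atTop (nhds 0) := by
    have h1 := tendsto_measure_cthickening_of_isCompact (μ := volume) hK
    rw [hK0] at h1
    have h2 : Filter.Tendsto (fun n : ℕ => 2 * (1 / ((n : ℝ) + 1))) Filter.atTop (nhds 0) := by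
      simpa using tendsto_one_div_add_atTop_nhds_zero_nat.const_mul (2 : ℝ)
    have h3 := (h1.comp h2).ennrpow_const (1 / 2 : ℝ)
    rw [ENNReal.zero_rpow_of_pos (by norm_num)] at h3
    have h4 := ENNReal.Tendsto.const_mul (a := 4 * c) h3 (Or.inr (ENNReal.mul_ne_top (by simp) hct))
    simpa using h4
  have h0 : om d * ν K ≤ 0 := ge_of_tendsto' hlim fun n => main _ (by positivity)
  rw [nonpos_iff_eq_zero, mul_eq_zero] at h0
  exact h0.resolve_left (om_ne_zero d)

end DPR
end

section
open MeasureTheory Metric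
open scoped RealInnerProductSpace ENNReal NNReal SchwartzMap LineDeriv Laplacian

namespace DPR

lemma expand {d : ℕ} (y : E d) : y = ∑ l : Fin d, y l • (eb l : E d) := by
  ext k
  simp [eb, Pi.single_apply]

lemma abs_coord {d : ℕ} (y : E d) (l : Fin d) : ‖y l‖ ≤ ‖y‖ := PiLp.norm_apply_le y l

lemma lineDeriv_apply {d : ℕ} (b : E d) (u : 𝓢(E d, ℂ)) (y : E d) :
    (∂_{b} u : 𝓢(E d, ℂ)) y = ∑ l : Fin d, b l • (∂_{eb l} u : 𝓢(E d, ℂ)) y := by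
  simp only [SchwartzMap.lineDerivOp_apply_eq_fderiv]
  conv_lhs => rw [expand b]
  simp [map_sum]

lemma lineDeriv_eq {d : ℕ} (b : E d) (u : 𝓢(E d, ℂ)) :
    (∂_{b} u : 𝓢(E d, ℂ)) = ∑ l : Fin d, b l • (∂_{eb l} u : 𝓢(E d, ℂ)) := by
  ext y
  rw [lineDeriv_apply]
  simp

lemma second_apply {d : ℕ} (w b : E d) (u : 𝓢(E d, ℂ)) (y : E d) :
    fderiv ℝ (∂_{b} u : 𝓢(E d, ℂ)) y w
      = ∑ l : Fin d, b l • fderiv ℝ (∂_{eb l} u : 𝓢(E d, ℂ)) y w := by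
  simp only [← SchwartzMap.lineDerivOp_apply_eq_fderiv]
  rw [lineDeriv_eq b u, LineDeriv.lineDerivOp_sum, sum_apply]
  simp [LineDeriv.lineDerivOp_smul]

lemma first_bound {d : ℕ} (b : E d) (u : 𝓢(E d, ℂ)) (y : E d) :
    ‖(∂_{b} u : 𝓢(E d, ℂ)) y‖ₑ ≤ ENNReal.ofReal ‖b‖ * W1 u y := by
  rw [lineDeriv_apply, W1, Finset.mul_sum]
  refine (enorm_sum_le _ _).trans (Finset.sum_le_sum fun l _ => ?_)
  rw [enorm_smul, ← ofReal_norm (b l)]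
  gcongr; exact abs_coord _ _

lemma second_bound {d : ℕ} (w b : E d) (u : 𝓢(E d, ℂ)) (y : E d) :
    ‖fderiv ℝ (∂_{b} u : 𝓢(E d, ℂ)) y w‖ₑ ≤ ENNReal.ofReal ‖b‖ * ENNReal.ofReal ‖w‖ * W2 u y := by
  have h : ∀ l : Fin d, ‖fderiv ℝ (∂_{(eb l : E d)} u : 𝓢(E d, ℂ)) y w‖ₑ ≤
      ENNReal.ofReal ‖w‖ * ∑ i : Fin d, ‖(∂_{eb i} (∂_{eb l} u) : 𝓢(E d, ℂ)) y‖ₑ := fun l => by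
    rw [← SchwartzMap.lineDerivOp_apply_eq_fderiv]
    exact first_bound w _ y
  rw [second_apply]
  refine (enorm_sum_le _ _).trans ?_
  rw [W2, Finset.sum_comm, mul_assoc, Finset.mul_sum, Finset.mul_sum]
  refine Finset.sum_le_sum fun l _ => ?_
  rw [enorm_smul, ← ofReal_norm (b l)]
  gcongr
  · exact abs_coord _ _
  · exact h l

lemma exists_dual {d : ℕ} (a : Fin d → E d) (ha : LinearIndependent ℝ a) :
    ∃ b : Fin d → E d, ∀ l, ∑ j, (b j) l • a j = eb l := by
  rcases isEmpty_or_nonempty (Fin d) with h0 | h0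
  · exact ⟨fun _ => 0, fun l => h0.elim l⟩
  set B := basisOfLinearIndependentOfCardEqFinrank ha (by simp) with hB
  refine ⟨fun j => WithLp.toLp 2 fun l => B.repr (eb l) j, fun l => ?_⟩
  have := B.sum_repr (eb l)
  simpa [hB] using this

lemma laplacian_dual {d : ℕ} (a b : Fin d → E d) (h : ∀ l, ∑ j, (b j) l • a j = eb l)
    (u : 𝓢(E d, ℂ)) (y : E d) :
    (Δ u : 𝓢(E d, ℂ)) y = ∑ j, fderiv ℝ (∂_{b j} u : 𝓢(E d, ℂ)) y (a j) := by
  rw [SchwartzMap.laplacian_eq_sum (EuclideanSpace.basisFun (Fin d) ℝ), sum_apply]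
  simp_rw [second_apply _ (b _)]
  rw [Finset.sum_comm]
  refine Finset.sum_congr rfl fun l _ => ?_
  have : (EuclideanSpace.basisFun (Fin d) ℝ) l = eb l := by simp [eb]
  rw [this, SchwartzMap.lineDerivOp_apply_eq_fderiv]
  conv_lhs => enter [2]; rw [← h l]
  rw [map_sum]
  simp only [map_smul]

lemma meas_fd {d : ℕ} {L : E d → E d →L[ℝ] ℝ} (hL : Continuous L) {v : E d → E d} (hv : Measurable v) :
    Measurable fun x => L x (v x) := by
  have : Continuous fun q : E d × E d => L q.1 q.2 := (hL.comp continuous_fst).clm_apply continuous_snd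
  exact this.measurable.comp (measurable_id.prodMk hv)

lemma ext_div {d : ℕ} (lam σp σm : Measure (E d)) [IsFiniteMeasure lam] [IsFiniteMeasure σp] [IsFiniteMeasure σm]
    (v : E d → E d) (hv : Measurable v) (hv1 : ∀ᵐ x ∂lam, ‖v x‖ = 1)
    (hdiv : ∀ f : E d → ℝ, ContDiff ℝ 1 f → HasCompactSupport f →
      ∫ x, ⟪gradient f x, v x⟫ ∂lam = ∫ x, f x ∂σm - ∫ x, f x ∂σp)
    (f : E d → ℝ) (hf : ContDiff ℝ 1 f) (C : ℝ) (hC : ∀ x, ‖f x‖ ≤ C) (hC' : ∀ x, ‖fderiv ℝ f x‖ ≤ C) :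
    ∫ x, fderiv ℝ f x (v x) ∂lam = ∫ x, f x ∂σm - ∫ x, f x ∂σp := by
  have hC0 : 0 ≤ C := (norm_nonneg _).trans (hC 0)
  let χ : ContDiffBump (0 : E d) := ⟨1, 2, one_pos, one_lt_two⟩
  have hχ1 : ContDiff ℝ 1 χ := χ.contDiff
  obtain ⟨M, hM⟩ : ∃ M, ∀ x, ‖fderiv ℝ χ x‖ ≤ M :=
    (hχ1.continuous_fderiv one_ne_zero).bounded_above_of_compact_support (χ.hasCompactSupport.fderiv ℝ)
  have hM0 : 0 ≤ M := (norm_nonneg _).trans (hM 0)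
  let c : ℕ → ℝ := fun n => 1 / ((n : ℝ) + 1)
  have hc0 : ∀ n, 0 < c n := fun n => by positivity
  have hc1 : ∀ n, c n ≤ 1 := fun n => by
    rw [div_le_one (by positivity)]; linarith [n.cast_nonneg (α := ℝ)]
  have hct : Filter.Tendsto c Filter.atTop (nhds 0) := tendsto_one_div_add_atTop_nhds_zero_nat
  let F : ℕ → E d → ℝ := fun n x => χ (c n • x) * f x
  have hχn : ∀ n, ContDiff ℝ 1 fun x : E d => χ (c n • x) := fun n => hχ1.comp (contDiff_const_smul _)
  have hF1 : ∀ n, ContDiff ℝ 1 (F n) := fun n => (hχn n).mul hf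
  have hFs : ∀ n, HasCompactSupport (F n) := fun n => by
    refine HasCompactSupport.mul_right ?_
    exact χ.hasCompactSupport.comp_smul (hc0 n).ne'
  have hχd : ∀ n x w, fderiv ℝ (fun x : E d => χ (c n • x)) x w = c n * fderiv ℝ χ (c n • x) w := fun n x w => by
    have h1 : HasFDerivAt (fun x : E d => c n • x) (c n • ContinuousLinearMap.id ℝ (E d)) x :=
      (hasFDerivAt_id (𝕜 := ℝ) x).const_smul (c n)
    have h2 := (hχ1.differentiable one_ne_zero (c n • x)).hasFDerivAt.comp x h1
    have := h2.fderiv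
    simp only [Function.comp_def] at this
    rw [this]; simp
  have hFd : ∀ n x w, fderiv ℝ (F n) x w
      = χ (c n • x) * fderiv ℝ f x w + f x * (c n * fderiv ℝ χ (c n • x) w) := fun n x w => by
    have h := fderiv_mul ((hχn n).differentiable one_ne_zero x) (hf.differentiable one_ne_zero x)
    have e : F n = (fun x : E d => χ (c n • x)) * f := rfl
    rw [e, h]
    simp [hχd]
  have hχ01 : ∀ y, ‖χ y‖ ≤ 1 := fun y => by
    rw [Real.norm_of_nonneg χ.nonneg]; exact χ.le_one
  have hlim1 : ∀ x, Filter.Tendsto (fun n => χ (c n • x)) Filter.atTop (nhds 1) := fun x => by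
    have h1 : Filter.Tendsto (fun n => c n • x) Filter.atTop (nhds (0 : E d)) := by
      simpa using hct.smul_const x
    have h2 := (χ.continuous.tendsto 0).comp h1
    have h3 : χ (0 : E d) = 1 := χ.one_of_mem_closedBall (by simp [χ])
    rwa [h3] at h2
  have hlim0 : ∀ x, Filter.Tendsto (fun n => F n x) Filter.atTop (nhds (f x)) := fun x => by
    simpa using (hlim1 x).mul_const (f x)
  have hFb : ∀ n x, ‖F n x‖ ≤ C := fun n x => by
    rw [norm_mul]
    calc _ ≤ 1 * C := by gcongr; exacts [hχ01 _, hC x]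
      _ = C := one_mul _
  have key : ∀ m : Measure (E d), IsFiniteMeasure m →
      Filter.Tendsto (fun n => ∫ x, F n x ∂m) Filter.atTop (nhds (∫ x, f x ∂m)) := fun m _ =>
    tendsto_integral_of_dominated_convergence (fun _ => C) (fun n => (hF1 n).continuous.aestronglyMeasurable)
      (integrable_const _) (fun n => ae_of_all _ (hFb n)) (ae_of_all _ hlim0)
  have kd : Filter.Tendsto (fun n => ∫ x, fderiv ℝ (F n) x (v x) ∂lam) Filter.atTop
      (nhds (∫ x, fderiv ℝ f x (v x) ∂lam)) := by
    refine tendsto_integral_of_dominated_convergence (fun _ => C + C * M) (fun n => ?_) (integrable_const _)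
      (fun n => ?_) (ae_of_all _ fun x => ?_)
    · exact (meas_fd ((hF1 n).continuous_fderiv one_ne_zero) hv).aestronglyMeasurable
    · filter_upwards [hv1] with x hx
      rw [hFd]
      refine (norm_add_le _ _).trans ?_
      rw [norm_mul, norm_mul, norm_mul]
      have e1 : ‖fderiv ℝ f x (v x)‖ ≤ C := by
        simpa [hx] using (ContinuousLinearMap.le_opNorm _ (v x)).trans (mul_le_mul_of_nonneg_right (hC' x) (norm_nonneg _))
      have e2 : ‖fderiv ℝ χ (c n • x) (v x)‖ ≤ M := by
        simpa [hx] using (ContinuousLinearMap.le_opNorm _ (v x)).trans (mul_le_mul_of_nonneg_right (hM (c n • x)) (norm_nonneg _))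
      have e3 : ‖c n‖ ≤ 1 := by rw [Real.norm_of_nonneg (hc0 n).le]; exact hc1 n
      calc _ ≤ 1 * C + C * (1 * M) := by gcongr; exacts [hχ01 _, hC x]
        _ = _ := by ring
    · simp_rw [hFd]
      have h1 := (hlim1 x).mul_const (fderiv ℝ f x (v x))
      have h2 : Filter.Tendsto (fun n => c n * fderiv ℝ χ (c n • x) (v x)) Filter.atTop (nhds 0) := by
        refine squeeze_zero_norm (a := fun n => c n * (M * ‖v x‖)) (fun n => ?_) (by simpa using hct.mul_const (M * ‖v x‖))
        rw [norm_mul, Real.norm_of_nonneg (hc0 n).le]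
        have := hc0 n
        gcongr
        exact (ContinuousLinearMap.le_opNorm _ (v x)).trans (mul_le_mul_of_nonneg_right (hM (c n • x)) (norm_nonneg _))
      simpa using h1.add (h2.const_mul (f x))
  have hgr : ∀ n, ∫ x, fderiv ℝ (F n) x (v x) ∂lam = ∫ x, F n x ∂σm - ∫ x, F n x ∂σp := fun n => by
    rw [← hdiv (F n) (hF1 n) (hFs n)]
    refine integral_congr_ae (ae_of_all _ fun x => ?_)
    simp [gradient, InnerProductSpace.toDual_symm_apply]
  simp_rw [hgr] at kd
  exact tendsto_nhds_unique kd ((key σm inferInstance).sub (key σp inferInstance))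

end DPR
end

section
open MeasureTheory Metric
open scoped RealInnerProductSpace ENNReal NNReal SchwartzMap LineDeriv Laplacian

namespace DPR

lemma schwartz_bdd {d : ℕ} {G : Type*} [NormedAddCommGroup G] [NormedSpace ℝ G] (U : 𝓢(E d, G)) :
    ∃ C, ∀ y, ‖U y‖ ≤ C :=
  ⟨_, fun y => U.norm_le_seminorm ℝ y⟩

lemma key_j {d : ℕ} (lam σp σm : Measure (E d)) [IsFiniteMeasure lam] [IsFiniteMeasure σp] [IsFiniteMeasure σm]
    (v : E d → E d) (hv : Measurable v) (hv1 : ∀ᵐ x ∂lam, ‖v x‖ = 1)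
    (hdiv : ∀ f : E d → ℝ, ContDiff ℝ 1 f → HasCompactSupport f →
      ∫ x, ⟪gradient f x, v x⟫ ∂lam = ∫ x, f x ∂σm - ∫ x, f x ∂σp)
    (a b : E d) (ε : ℝ) (hε : 0 < ε) (hε4 : ε ≤ 1 / 4) (S : Set (E d)) (hS : MeasurableSet S)
    (ν : Measure (E d)) [IsFiniteMeasure ν] (g : E d → ℝ) (hgm : Measurable g)
    (hg : ∀ F : E d → ℝ, Measurable F → ∫ x in S, F x ∂lam = ∫ x, g x * F x ∂ν)
    (hgv : ∀ᵐ x ∂ν, ‖g x • v x - a‖ ≤ ε)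
    (u : 𝓢(E d, ℂ)) (s : E d → ℝ) (hs : ContDiff ℝ 1 s) (hsε : ∀ x, ‖fderiv ℝ s x‖ ≤ ε) (z : E d) (hz : ‖z‖ ≤ 1) :
    ‖∫ x, (fderiv ℝ (∂_{b} u : 𝓢(E d, ℂ)) (x + s x • z) a).re ∂ν‖ₑ ≤
      ENNReal.ofReal (‖b‖ * (2 + ‖a‖)) * (ENNReal.ofReal ε * ∫⁻ x, W2 u (x + s x • z) ∂ν
        + ∫⁻ x, W2 u (x + s x • z) ∂(lam.restrict Sᶜ) + ∫⁻ x, W1 u (x + s x • z) ∂(σp + σm)) := by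
  set U : 𝓢(E d, ℂ) := ∂_{b} u with hU
  obtain ⟨C1, hC1⟩ := schwartz_bdd U
  obtain ⟨C2, hC2⟩ : ∃ C, ∀ y, ‖fderiv ℝ U y‖ ≤ C := schwartz_bdd (SchwartzMap.fderivCLM ℝ (E d) ℂ U)
  have hC20 : 0 ≤ C2 := (norm_nonneg _).trans (hC2 0)
  have hU1 : ContDiff ℝ 1 U := U.smooth 1
  set Φ : E d → E d := fun x => x + s x • z with hΦ
  have hΦ1 : ContDiff ℝ 1 Φ := contDiff_id.add (hs.smul contDiff_const)
  set ψ : E d → ℝ := fun x => (U (Φ x)).re with hψ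
  have hψ1 : ContDiff ℝ 1 ψ := Complex.reCLM.contDiff.comp (hU1.comp hΦ1)
  have hψd : ∀ x w, fderiv ℝ ψ x w = (fderiv ℝ U (Φ x) (w + fderiv ℝ s x w • z)).re := fun x w => by
    have h1 : HasFDerivAt Φ (ContinuousLinearMap.id ℝ (E d) + (fderiv ℝ s x).smulRight z) x :=
      (hasFDerivAt_id x).add ((hs.differentiable one_ne_zero x).hasFDerivAt.smul_const z)
    have h2 := Complex.reCLM.hasFDerivAt.comp x ((hU1.differentiable one_ne_zero (Φ x)).hasFDerivAt.comp x h1)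
    have h3 : fderiv ℝ ψ x = _ := h2.fderiv
    rw [h3]; simp
  have hw : ∀ x w, ‖w + fderiv ℝ s x w • z‖ ≤ 2 * ‖w‖ := fun x w => by
    have h1 : ‖fderiv ℝ s x w‖ ≤ ε * ‖w‖ := (ContinuousLinearMap.le_opNorm _ _).trans (by gcongr; exact hsε x)
    calc _ ≤ ‖w‖ + ‖fderiv ℝ s x w‖ * ‖z‖ := (norm_add_le _ _).trans_eq (by rw [norm_smul])
      _ ≤ ‖w‖ + ε * ‖w‖ * 1 := by gcongr
      _ ≤ 2 * ‖w‖ := by nlinarith [norm_nonneg w]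
  have hψb : ∀ x w, ‖fderiv ℝ ψ x w‖ ≤ 2 * C2 * ‖w‖ := fun x w => by
    rw [hψd]
    refine (Complex.abs_re_le_norm _).trans ((ContinuousLinearMap.le_opNorm _ _).trans ?_)
    calc _ ≤ C2 * (2 * ‖w‖) := by gcongr; exacts [hC2 _, hw x w]
      _ = _ := by ring
  have hψn : ∀ x, ‖fderiv ℝ ψ x‖ ≤ 2 * C2 := fun x => ContinuousLinearMap.opNorm_le_bound _ (by positivity) (hψb x)
  have hψ0 : ∀ x, ‖ψ x‖ ≤ C1 := fun x => (Complex.abs_re_le_norm _).trans (hC1 _)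
  have hmain := ext_div lam σp σm v hv hv1 hdiv ψ hψ1 (max C1 (2 * C2)) (fun x => (hψ0 x).trans (le_max_left _ _))
    (fun x => (hψn x).trans (le_max_right _ _))
  set P : E d → ℝ := fun x => fderiv ℝ ψ x (v x) with hP
  have hPm : Measurable P := meas_fd (hψ1.continuous_fderiv one_ne_zero) hv
  have hPb : ∀ᵐ x ∂lam, ‖P x‖ ≤ 2 * C2 := by
    filter_upwards [hv1] with x hx
    simpa [hx] using hψb x (v x)
  have hPi : Integrable P lam := Integrable.of_bound hPm.aestronglyMeasurable _ hPb
  rw [← integral_add_compl hS hPi, hg P hPm] at hmain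
  set A : E d → ℝ := fun x => (fderiv ℝ U (Φ x) a).re with hA
  have hAc : Continuous A := Complex.continuous_re.comp
    (((hU1.continuous_fderiv one_ne_zero).comp hΦ1.continuous).clm_apply continuous_const)
  have hAi : Integrable A ν := Integrable.of_bound hAc.aestronglyMeasurable (C2 * ‖a‖) (ae_of_all _ fun x =>
    (Complex.abs_re_le_norm _).trans ((ContinuousLinearMap.le_opNorm _ _).trans (by gcongr; exact hC2 _)))
  have hgP : ∀ x, g x * P x = fderiv ℝ ψ x (g x • v x) := fun x => by simp [hP]
  have hgvn : ∀ᵐ x ∂ν, ‖g x • v x‖ ≤ ‖a‖ + ε := by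
    filter_upwards [hgv] with x hx
    calc ‖g x • v x‖ = ‖a + (g x • v x - a)‖ := by congr 1; abel
      _ ≤ _ := (norm_add_le _ _).trans (by gcongr)
  have hgPi : Integrable (fun x => g x * P x) ν := by
    refine Integrable.of_bound (hgm.mul hPm).aestronglyMeasurable (2 * C2 * (‖a‖ + ε)) ?_
    filter_upwards [hgvn] with x hx
    rw [hgP]
    exact (hψb x _).trans (by gcongr)
  set R : E d → ℝ := fun x => A x - g x * P x with hR
  have hRb : ∀ᵐ x ∂ν, ‖R x‖ₑ ≤ ENNReal.ofReal (‖b‖ * (2 + ‖a‖)) * (ENNReal.ofReal ε * W2 u (Φ x)) := by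
    filter_upwards [hgv, hgvn] with x hx hx2
    set e := (g x • v x - a) + fderiv ℝ s x (g x • v x) • z with he
    have h1 : ‖fderiv ℝ s x (g x • v x)‖ ≤ ε * (‖a‖ + ε) := (ContinuousLinearMap.le_opNorm _ _).trans (by
      gcongr; exact hsε x)
    have h2 : ‖e‖ ≤ (2 + ‖a‖) * ε := by
      calc _ ≤ ‖g x • v x - a‖ + ‖fderiv ℝ s x (g x • v x)‖ * ‖z‖ := (norm_add_le _ _).trans_eq (by rw [norm_smul])
        _ ≤ ε + ε * (‖a‖ + ε) * 1 := by gcongr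
        _ ≤ _ := by nlinarith [norm_nonneg a]
    have h3 : R x = - (fderiv ℝ U (Φ x) e).re := by
      have : e = (g x • v x + fderiv ℝ s x (g x • v x) • z) - a := by rw [he]; abel
      rw [hR, this, map_sub, Complex.sub_re, ← hψd]
      simp only [hgP, hA]; ring
    rw [h3, enorm_neg]
    calc _ ≤ ‖fderiv ℝ U (Φ x) e‖ₑ := by
          rw [← ofReal_norm, ← ofReal_norm]; exact ENNReal.ofReal_le_ofReal (Complex.abs_re_le_norm _)
      _ ≤ ENNReal.ofReal ‖b‖ * ENNReal.ofReal ‖e‖ * W2 u (Φ x) := second_bound e b u _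
      _ ≤ ENNReal.ofReal ‖b‖ * ENNReal.ofReal ((2 + ‖a‖) * ε) * W2 u (Φ x) := by gcongr
      _ = _ := by
        rw [ENNReal.ofReal_mul (by positivity), ENNReal.ofReal_mul (by positivity)]; ring
  have hsum : ∫ x, A x ∂ν = ∫ x, R x ∂ν + (∫ x, ψ x ∂σm - ∫ x, ψ x ∂σp - ∫ x in Sᶜ, P x ∂lam) := by
    rw [hR, integral_sub hAi hgPi, ← hmain]; ring
  set B := ENNReal.ofReal (‖b‖ * (2 + ‖a‖)) with hB
  have hbB : ENNReal.ofReal ‖b‖ ≤ B := ENNReal.ofReal_le_ofReal (by nlinarith [norm_nonneg a, norm_nonneg b])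
  have b1 : ‖∫ x, R x ∂ν‖ₑ ≤ B * (ENNReal.ofReal ε * ∫⁻ x, W2 u (Φ x) ∂ν) := by
    have hm : Measurable fun x => W2 u (Φ x) := (W2_meas u).comp hΦ1.continuous.measurable
    rw [← lintegral_const_mul _ hm, ← lintegral_const_mul _ (hm.const_mul _)]
    exact (enorm_integral_le_lintegral_enorm _).trans (lintegral_mono_ae hRb)
  have b2 : ∀ m : Measure (E d), ‖∫ x, ψ x ∂m‖ₑ ≤ B * ∫⁻ x, W1 u (Φ x) ∂m := fun m => by
    have hm : Measurable fun x => W1 u (Φ x) := (W1_meas u).comp hΦ1.continuous.measurable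
    rw [← lintegral_const_mul _ hm]
    refine (enorm_integral_le_lintegral_enorm _).trans (lintegral_mono fun x => ?_)
    calc _ ≤ ‖U (Φ x)‖ₑ := by
          rw [← ofReal_norm, ← ofReal_norm]; exact ENNReal.ofReal_le_ofReal (Complex.abs_re_le_norm _)
      _ ≤ _ := (first_bound b u _).trans (by gcongr)
  have b3 : ‖∫ x in Sᶜ, P x ∂lam‖ₑ ≤ B * ∫⁻ x in Sᶜ, W2 u (Φ x) ∂lam := by
    have hm : Measurable fun x => W2 u (Φ x) := (W2_meas u).comp hΦ1.continuous.measurable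
    rw [← lintegral_const_mul _ hm]
    refine (enorm_integral_le_lintegral_enorm _).trans (lintegral_mono_ae ?_)
    filter_upwards [ae_restrict_of_ae hv1] with x hx
    rw [hP]; simp only [hψd]
    have h1 := hw x (v x)
    rw [hx, mul_one] at h1
    calc _ ≤ ‖fderiv ℝ U (Φ x) (v x + fderiv ℝ s x (v x) • z)‖ₑ := by
          rw [← ofReal_norm, ← ofReal_norm]; exact ENNReal.ofReal_le_ofReal (Complex.abs_re_le_norm _)
      _ ≤ ENNReal.ofReal ‖b‖ * ENNReal.ofReal 2 * W2 u (Φ x) := (second_bound _ b u _).trans (by gcongr)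
      _ ≤ _ := by
        gcongr
        rw [← ENNReal.ofReal_mul (norm_nonneg _)]
        exact ENNReal.ofReal_le_ofReal (by nlinarith [norm_nonneg a, norm_nonneg b])
  change ‖∫ x, A x ∂ν‖ₑ ≤ _
  rw [hsum, lintegral_add_measure]
  refine (enorm_add_le _ _).trans ?_
  refine (add_le_add b1 (enorm_sub_le.trans (add_le_add (enorm_sub_le.trans (add_le_add (b2 σm) (b2 σp))) b3))).trans_eq ?_
  ring

theorem key_of {d : ℕ} (a : Fin d → E d) (ha : LinearIndependent ℝ a) : ∃ Ca : ℝ≥0∞, Ca ≠ ∞ ∧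
    ∀ ε : ℝ, 0 < ε → ε ≤ 1 / 4 → ∀ (lam σp σm : Fin d → Measure (E d)), (∀ i, IsFiniteMeasure (lam i)) →
    (∀ i, IsFiniteMeasure (σp i)) → (∀ i, IsFiniteMeasure (σm i)) → ∀ v : Fin d → E d → E d,
    (∀ i, Measurable (v i)) → (∀ i, ∀ᵐ x ∂(lam i), ‖v i x‖ = 1) →
    (∀ i, ∀ f : E d → ℝ, ContDiff ℝ 1 f → HasCompactSupport f →
      ∫ x, ⟪gradient f x, v i x⟫ ∂(lam i) = ∫ x, f x ∂(σm i) - ∫ x, f x ∂(σp i)) →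
    ∀ S : Set (E d), MeasurableSet S → ∀ (ν : Measure (E d)) [IsFiniteMeasure ν] (g : Fin d → E d → ℝ),
    (∀ i, Measurable (g i)) → (∀ i, ∀ F : E d → ℝ, Measurable F → ∫ x in S, F x ∂(lam i) = ∫ x, g i x * F x ∂ν) →
    (∀ i, ∀ᵐ x ∂ν, ‖g i x • v i x - a i‖ ≤ ε) →
    Key Ca ε ν (∑ i, (lam i).restrict Sᶜ) (∑ i, (σp i + σm i)) := by
  obtain ⟨b, hb⟩ := exists_dual a ha
  refine ⟨∑ i, ENNReal.ofReal (‖b i‖ * (2 + ‖a i‖)), ENNReal.sum_ne_top.2 fun _ _ => ENNReal.ofReal_ne_top, ?_⟩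
  intro ε hε hε4 lam σp σm h1 h2 h3 v hv hv1 hdiv S hS ν _ g hgm hg hgv u s hs hsε z hz
  have hle : ∀ (m : Fin d → Measure (E d)) (F : E d → ℝ≥0∞) i, ∫⁻ x, F x ∂(m i) ≤ ∫⁻ x, F x ∂(∑ i, m i) := by
    intro m F i
    rw [lintegral_finsetSum_measure]
    exact Finset.single_le_sum (f := fun i => ∫⁻ x, F x ∂(m i)) (fun _ _ => zero_le) (Finset.mem_univ i)
  have hΦ : Continuous fun x => x + s x • z := continuous_id.add (hs.continuous.smul continuous_const)
  have e : ∫ x, ((Δ u : 𝓢(E d, ℂ)) (x + s x • z)).re ∂ν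
      = ∑ i, ∫ x, (fderiv ℝ (∂_{b i} u : 𝓢(E d, ℂ)) (x + s x • z) (a i)).re ∂ν := by
    rw [← integral_finsetSum]
    · refine integral_congr_ae (ae_of_all _ fun x => ?_)
      simp only [laplacian_dual a b hb, Complex.re_sum]
    · intro i _
      simp_rw [← SchwartzMap.lineDerivOp_apply_eq_fderiv]
      obtain ⟨C, hC⟩ := schwartz_bdd (∂_{a i} (∂_{b i} u) : 𝓢(E d, ℂ))
      exact Integrable.of_bound (Complex.continuous_re.comp ((SchwartzMap.continuous _).comp hΦ)).aestronglyMeasurable C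
        (ae_of_all _ fun x => (Complex.abs_re_le_norm _).trans (hC _))
  rw [e, Finset.sum_mul]
  refine (enorm_sum_le _ _).trans (Finset.sum_le_sum fun i _ => ?_)
  have := h1 i
  have := h2 i
  have := h3 i
  refine (key_j (lam i) (σp i) (σm i) (v i) (hv i) (hv1 i) (hdiv i) (a i) (b i) ε hε hε4 S hS ν (g i) (hgm i) (hg i)
    (hgv i) u s hs hsε z hz).trans ?_
  exact mul_le_mul' le_rfl (add_le_add (add_le_add le_rfl (hle (fun i => (lam i).restrict Sᶜ) _ i))
    (hle (fun i => σp i + σm i) _ i))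

end DPR
end

section
open MeasureTheory Metric
open scoped RealInnerProductSpace ENNReal NNReal SchwartzMap LineDeriv Laplacian

namespace DPR

lemma select {d : ℕ} (ν lb Sg : Measure (E d)) [IsFiniteMeasure ν] [IsFiniteMeasure lb] [IsFiniteMeasure Sg]
    (hsing : lb ⟂ₘ ν) (ε' : ℝ) (hε' : 0 < ε') (C₀ : Set (E d)) (hC₀ : IsCompact C₀) (hpos : ν C₀ ≠ 0) :
    ∃ K ⊆ C₀, IsCompact K ∧ ν K ≠ 0 ∧ ∃ r₁ : ℝ, 0 < r₁ ∧ ∃ L : ℝ≥0∞, L ≠ ∞ ∧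
      (∀ x ∈ K, ∀ r, 0 < r → r < r₁ → lb (closedBall x r) ≤ ENNReal.ofReal ε' * ν (closedBall x (3 * r))) ∧
      (∀ x ∈ K, ∀ r, 0 < r → r < r₁ → Sg (closedBall x r) ≤ L * ν (closedBall x (3 * r))) := by
  let Kn : ℕ → Set (E d) := fun n => {x | x ∈ C₀ ∧ ∀ r, 0 < r → r < 1 / ((n : ℝ) + 1) →
    lb (closedBall x r) ≤ ENNReal.ofReal ε' * ν (closedBall x r) ∧ Sg (closedBall x r) ≤ n * ν (closedBall x r)}
  have hdl : ∀ {p q c : ℝ≥0∞}, q ≠ ∞ → c ≠ ∞ → p / q < c → p ≤ c * q := fun {p q c} hq hc h =>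
    (ENNReal.div_le_iff_le_mul (Or.inr hc) (Or.inl hq)).1 h.le
  have hae : ∀ᵐ x ∂ν, x ∈ C₀ → ∃ n, x ∈ Kn n := by
    filter_upwards [Besicovitch.ae_tendsto_rnDeriv lb ν, Besicovitch.ae_tendsto_rnDeriv Sg ν,
      hsing.rnDeriv_ae_eq_zero, Measure.rnDeriv_lt_top Sg ν] with x h1 h2 h3 h4 hx
    have h3' : lb.rnDeriv ν x = 0 := h3
    rw [h3'] at h1
    have e1 := h1.eventually (gt_mem_nhds (ENNReal.ofReal_pos.2 hε'))
    obtain ⟨m, hm⟩ := ENNReal.exists_nat_gt h4.ne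
    have e2 := h2.eventually (gt_mem_nhds hm)
    obtain ⟨δ, hδ, hδ'⟩ := mem_nhdsGT_iff_exists_Ioo_subset.1 (e1.and e2)
    obtain ⟨k, hk⟩ := exists_nat_one_div_lt (show (0 : ℝ) < δ from hδ)
    refine ⟨max m k, hx, fun r hr hr' => ?_⟩
    have hrδ : r < δ := by
      refine hr'.trans_le (le_trans ?_ hk.le)
      have : (k : ℝ) ≤ (max m k : ℕ) := by exact_mod_cast le_max_right _ _
      gcongr
    obtain ⟨f1, f2⟩ := hδ' ⟨hr, hrδ⟩
    refine ⟨hdl (measure_ne_top _ _) ENNReal.ofReal_ne_top f1, (hdl (measure_ne_top _ _) (by simp) f2).trans ?_⟩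
    gcongr
    exact le_max_left _ _
  obtain ⟨n, hn⟩ : ∃ n, ν (Kn n) ≠ 0 := by
    by_contra! hcon
    refine hpos ?_
    have h1 : ν (⋃ n, Kn n) = 0 := measure_iUnion_null hcon
    have h2 : C₀ ≤ᵐ[ν] (⋃ n, Kn n : Set (E d)) := by
      filter_upwards [hae] with x hx hx'
      exact Set.mem_iUnion.2 (hx hx')
    exact le_antisymm ((measure_mono_ae h2).trans h1.le) zero_le
  have hsub : Kn n ⊆ C₀ := fun x hx => hx.1
  have hcl : closure (Kn n) ⊆ C₀ := closure_minimal hsub hC₀.isClosed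
  have gen : ∀ (m : Measure (E d)) (c : ℝ≥0∞),
      (∀ x ∈ Kn n, ∀ r, 0 < r → r < 1 / ((n : ℝ) + 1) → m (closedBall x r) ≤ c * ν (closedBall x r)) →
      ∀ x ∈ closure (Kn n), ∀ r, 0 < r → r < 1 / (2 * ((n : ℝ) + 1)) →
        m (closedBall x r) ≤ c * ν (closedBall x (3 * r)) := by
    intro m c h x hx r hr hr'
    obtain ⟨y, hy, hxy⟩ := Metric.mem_closure_iff.1 hx r hr
    have h2 : 2 * r < 1 / ((n : ℝ) + 1) := by
      rw [lt_div_iff₀ (by positivity)] at hr' ⊢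
      linarith
    calc m (closedBall x r) ≤ m (closedBall y (2 * r)) := measure_mono (closedBall_subset_closedBall' (by linarith))
      _ ≤ c * ν (closedBall y (2 * r)) := h y hy _ (by linarith) h2
      _ ≤ _ := by
        gcongr
        exact closedBall_subset_closedBall' (by rw [dist_comm]; linarith)
  refine ⟨closure (Kn n), hcl, hC₀.of_isClosed_subset isClosed_closure hcl, fun h0 => hn (measure_mono_null subset_closure h0),
    1 / (2 * ((n : ℝ) + 1)), by positivity, n, by simp, gen lb _ fun x hx r h1 h2 => (hx.2 r h1 h2).1,
    gen Sg _ fun x hx r h1 h2 => (hx.2 r h1 h2).2⟩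

theorem main {d : ℕ}
    (μ : Measure (E d)) [IsLocallyFiniteMeasure μ]
    (lam : Fin d → Measure (E d))
    (hlamFin : ∀ i, IsFiniteMeasure (lam i))
    (v : Fin d → E d → E d)
    (hvMeas : ∀ i, Measurable (v i))
    (hvUnit : ∀ i, ∀ᵐ x ∂(lam i), ‖v i x‖ = 1)
    (σp σm : Fin d → Measure (E d))
    (hσpFin : ∀ i, IsFiniteMeasure (σp i)) (hσmFin : ∀ i, IsFiniteMeasure (σm i))
    (hdiv : ∀ i, ∀ f : E d → ℝ,
      ContDiff ℝ 1 f → HasCompactSupport f →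
      ∫ x, ⟪gradient f x, v i x⟫ ∂(lam i) = ∫ x, f x ∂(σm i) - ∫ x, f x ∂(σp i))
    (hac : ∀ i, μ ≪ lam i)
    (hind : ∀ᵐ x ∂μ, LinearIndependent ℝ (fun i => v i x)) :
    μ ≪ (volume : Measure (E d)) := by
  refine Measure.AbsolutelyContinuous.mk fun N hN hN0 => ?_
  by_contra hμN
  obtain ⟨n, hn⟩ : ∃ n : ℕ, μ (N ∩ ball 0 n) ≠ 0 := by
    by_contra! hcon
    refine hμN ?_
    rw [← Set.inter_univ N, ← iUnion_ball_nat (0 : E d), Set.inter_iUnion]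
    exact measure_iUnion_null hcon
  set N' := N ∩ ball (0 : E d) n with hN'
  have hN'm : MeasurableSet N' := hN.inter measurableSet_ball
  set μ₀ := μ.restrict N' with hμ₀
  have : IsFiniteMeasure μ₀ := by
    refine ⟨?_⟩
    rw [hμ₀, Measure.restrict_apply_univ]
    exact (measure_mono Set.inter_subset_right).trans_lt measure_ball_lt_top
  have hμ₀u : μ₀ Set.univ ≠ 0 := by rwa [hμ₀, Measure.restrict_apply_univ]
  have hac₀ : ∀ i, μ₀ ≪ lam i := fun i => Measure.absolutelyContinuous_of_le Measure.restrict_le_self |>.trans (hac i)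
  let h : Fin d → E d → ℝ≥0∞ := fun i => μ₀.rnDeriv (lam i)
  have hhm : ∀ i, Measurable (h i) := fun i => Measure.measurable_rnDeriv _ _
  have hwd : ∀ i, (lam i).withDensity (h i) = μ₀ := fun i => Measure.withDensity_rnDeriv_eq _ _ (hac₀ i)
  have hh0 : ∀ i, ∀ᵐ x ∂μ₀, 0 < h i x := fun i => Measure.rnDeriv_pos (hac₀ i)
  have hht : ∀ i, ∀ᵐ x ∂μ₀, h i x < ∞ := fun i => (hac₀ i).ae_le (Measure.rnDeriv_lt_top _ _)
  let g : Fin d → E d → ℝ := fun i x => (h i x)⁻¹.toReal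
  have hgm : ∀ i, Measurable (g i) := fun i => (hhm i).inv.ennreal_toReal
  let A : E d → Fin d → E d := fun x i => g i x • v i x
  have hAm : Measurable A := measurable_pi_lambda _ fun i => (hgm i).smul (hvMeas i)
  have hop : IsOpen {a : Fin d → E d | LinearIndependent ℝ a} := isOpen_setOfPred_linearIndependent
  have hAli : ∀ᵐ x ∂μ₀, A x ∈ {a : Fin d → E d | LinearIndependent ℝ a} := by
    filter_upwards [ae_restrict_of_ae hind, ae_all_iff.2 hh0, ae_all_iff.2 hht] with x h1 h2 h3
    have h4 : ∀ i, g i x ≠ 0 := fun i => by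
      simp only [g]
      rw [ENNReal.toReal_inv]
      exact inv_ne_zero (ENNReal.toReal_pos (h2 i).ne' (h3 i).ne).ne'
    exact h1.units_smul (fun i => Units.mk0 (g i x) (h4 i))
  obtain ⟨a, ha, hapos⟩ := exists_mem_forall_mem_nhdsWithin_pos_measure (μ := μ₀.map A)
    (s := {a : Fin d → E d | LinearIndependent ℝ a}) (by
      rw [Measure.map_apply hAm hop.measurableSet]
      have : μ₀ (A ⁻¹' {a : Fin d → E d | LinearIndependent ℝ a}) = μ₀ Set.univ :=
        measure_congr (by filter_upwards [hAli] with x hx; exact propext ⟨fun _ => trivial, fun _ => hx⟩)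
      rwa [this])
  obtain ⟨Ca, hCa, hkey⟩ := key_of a ha
  obtain ⟨ε, hε, hε4, ε', hε', hcore⟩ := core (d := d) Ca hCa
  let G : Set (E d) := {x | ∀ i, 0 < h i x ∧ h i x < ∞}
  have hGm : MeasurableSet G := by
    have : G = ⋂ i, {x | 0 < h i x ∧ h i x < ∞} := by ext; simp [G]
    rw [this]
    exact MeasurableSet.iInter fun i => (measurableSet_lt measurable_const (hhm i)).inter
      (measurableSet_lt (hhm i) measurable_const)
  let S : Set (E d) := N' ∩ (G ∩ A ⁻¹' ball a ε)
  have hSm : MeasurableSet S := hN'm.inter (hGm.inter (hAm measurableSet_ball))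
  have hSpos : μ₀ S ≠ 0 := by
    have h1 := hapos (ball a ε) (mem_nhdsWithin_of_mem_nhds (ball_mem_nhds a hε))
    rw [Measure.map_apply hAm measurableSet_ball] at h1
    have : μ₀ S = μ₀ (A ⁻¹' ball a ε) := by
      refine measure_congr ?_
      filter_upwards [ae_all_iff.2 hh0, ae_all_iff.2 hht, ae_restrict_mem hN'm] with x h1 h2 h3
      exact propext ⟨fun hx => hx.2.2, fun hx => ⟨h3, fun i => ⟨h1 i, h2 i⟩, hx⟩⟩
    rw [this]; exact h1.ne'
  set ν := μ₀.restrict S with hν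
  have hgF : ∀ i, ∀ F : E d → ℝ, Measurable F → ∫ x in S, F x ∂(lam i) = ∫ x, g i x * F x ∂ν := by
    intro i F hF
    have e : ν = ((lam i).restrict S).withDensity (h i) := by
      rw [← restrict_withDensity hSm, hwd]
    rw [e, integral_withDensity_eq_integral_toReal_smul (hhm i)]
    · refine setIntegral_congr_fun hSm fun x hx => ?_
      have h1 := (hx.2.1 i)
      have h2 := (ENNReal.toReal_pos h1.1.ne' h1.2.ne).ne'
      simp only [g, smul_eq_mul, ENNReal.toReal_inv]
      field_simp
    · filter_upwards [ae_restrict_mem hSm] with x hx using (hx.2.1 i).2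
  have hgv : ∀ i, ∀ᵐ x ∂ν, ‖g i x • v i x - a i‖ ≤ ε := by
    intro i
    filter_upwards [ae_restrict_mem hSm] with x hx
    have : dist (A x) a < ε := hx.2.2
    rw [← dist_eq_norm]
    exact (dist_le_pi_dist (A x) a i).trans this.le
  have hK := hkey ε hε hε4 lam σp σm hlamFin hσpFin hσmFin v hvMeas hvUnit hdiv S hSm ν g hgm hgF hgv
  set lb := ∑ i, (lam i).restrict Sᶜ with hlb
  set Sg := ∑ i, (σp i + σm i) with hSg
  have hsing : lb ⟂ₘ ν := by
    refine ⟨S, hSm, ?_, ?_⟩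
    · rw [hlb, Measure.finsetSum_apply]
      refine Finset.sum_eq_zero fun i _ => ?_
      rw [Measure.restrict_apply hSm]; simp
    · rw [hν, Measure.restrict_apply hSm.compl]; simp
  have : IsFiniteMeasure lb := by rw [hlb]; infer_instance
  have : IsFiniteMeasure Sg := by rw [hSg]; infer_instance
  have hνS : 0 < ν S := by
    rw [hν, Measure.restrict_apply_self]; exact pos_iff_ne_zero.2 hSpos
  obtain ⟨C₀, hC₀S, hC₀, hC₀pos⟩ := hSm.exists_lt_isCompact hνS
  obtain ⟨K, hKC, hKc, hKpos, r₁, hr₁, L, hL, hb1, hb2⟩ := select ν lb Sg hsing ε' hε' C₀ hC₀ hC₀pos.ne'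
  have hKne : K.Nonempty := by
    by_contra hcon
    rw [Set.not_nonempty_iff_eq_empty] at hcon
    exact hKpos (by simp [hcon])
  have hK0 : volume K = 0 := measure_mono_null (fun x hx => (hC₀S (hKC hx)).1.1) hN0
  exact hKpos (hcore ν lb Sg K r₁ L hKc hKne hK0 hr₁ hL hb1 hb2 hK)

end DPR
end

open MeasureTheory Metric
open scoped RealInnerProductSpace ENNReal

/-- **De Philippis–Rindler theorem** (polar form). If `μ` is absolutely continuous with
respect to the mass measures of `d` one-dimensional normal currents in `ℝ^d` whose
direction fields are `μ`-a.e. linearly independent, then `μ ≪ volume`. -/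
theorem dePhilippis_rindler {d : ℕ}
    (μ : Measure (EuclideanSpace ℝ (Fin d))) [IsLocallyFiniteMeasure μ]
    (lam : Fin d → Measure (EuclideanSpace ℝ (Fin d)))
    (hlamFin : ∀ i, IsFiniteMeasure (lam i))
    (v : Fin d → EuclideanSpace ℝ (Fin d) → EuclideanSpace ℝ (Fin d))
    (hvMeas : ∀ i, Measurable (v i))
    (hvUnit : ∀ i, ∀ᵐ x ∂(lam i), ‖v i x‖ = 1)
    (σp σm : Fin d → Measure (EuclideanSpace ℝ (Fin d)))
    (hσpFin : ∀ i, IsFiniteMeasure (σp i)) (hσmFin : ∀ i, IsFiniteMeasure (σm i))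
    (hdiv : ∀ i, ∀ f : EuclideanSpace ℝ (Fin d) → ℝ,
      ContDiff ℝ 1 f → HasCompactSupport f →
      ∫ x, ⟪gradient f x, v i x⟫ ∂(lam i) = ∫ x, f x ∂(σm i) - ∫ x, f x ∂(σp i))
    (hac : ∀ i, μ ≪ lam i)
    (hind : ∀ᵐ x ∂μ, LinearIndependent ℝ (fun i => v i x)) :
    μ ≪ (volume : Measure (EuclideanSpace ℝ (Fin d))) := by
  exact DPR.main μ lam hlamFin v hvMeas hvUnit σp σm hσpFin hσmFin hdiv hac hind
end

section
/- Let X and Y be standard Borel spaces, let m be a σ-finite Borel measure on X, let φ : X → Y be a Borel measurable map, let E ⊆ X be a Borel set on which φ is injective, and let f : X → ℝ be m-integrable with f = 0 m-almost everywhere on X ∖ E. If ∫_{φ⁻¹(B)} f dm = 0 for every Borel set B ⊆ Y, then f = 0 m-almost everywhere. -/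
open MeasureTheory

/-- Claim (eq:p0): if `φ` is injective on a Borel set `E`, `f` is `m`-integrable and
vanishes `m`-a.e. outside `E`, and the pushforward of the signed measure `f·m` under
`φ` vanishes (i.e. `∫_{φ⁻¹(B)} f dm = 0` for every Borel `B`), then `f = 0` `m`-a.e. -/
theorem eq_zero_of_pushforward_eq_zero
    {X Y : Type*} [MeasurableSpace X] [StandardBorelSpace X]
    [MeasurableSpace Y] [StandardBorelSpace Y]
    (m : Measure X) [SigmaFinite m]
    (φ : X → Y) (hφ : Measurable φ)
    (E : Set X) (hE : MeasurableSet E) (hinj : Set.InjOn φ E)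
    (f : X → ℝ) (hf : Integrable f m)
    (hfE : ∀ᵐ x ∂m, x ∉ E → f x = 0)
    (hpush : ∀ B : Set Y, MeasurableSet B → ∫ x in φ ⁻¹' B, f x ∂m = 0) :
    ∀ᵐ x ∂m, f x = 0 := by
  have key : f =ᵐ[m] 0 := by
    refine hf.ae_eq_zero_of_forall_setIntegral_eq_zero ?_
    intro s hs _
    have hB : MeasurableSet (φ '' (s ∩ E)) :=
      (hs.inter hE).image_of_measurable_injOn hφ (hinj.mono Set.inter_subset_right)
    rw [← hpush _ hB, ← integral_indicator hs, ← integral_indicator (hφ hB)]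
    refine integral_congr_ae ?_
    filter_upwards [hfE] with x hx
    by_cases hxE : x ∈ E
    · have hiff : x ∈ φ ⁻¹' (φ '' (s ∩ E)) ↔ x ∈ s := by
        constructor
        · rintro ⟨y, ⟨hys, hyE⟩, hy⟩
          exact hinj hyE hxE hy ▸ hys
        · intro hxs
          exact ⟨x, ⟨hxs, hxE⟩, rfl⟩
      by_cases hxs : x ∈ s
      · rw [Set.indicator_of_mem hxs, Set.indicator_of_mem (hiff.2 hxs)]
      · rw [Set.indicator_of_notMem hxs, Set.indicator_of_notMem (fun h => hxs (hiff.1 h))]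
    · rw [Set.indicator_apply_eq_zero.2 (fun _ => hx hxE),
        Set.indicator_apply_eq_zero.2 (fun _ => hx hxE)]
  exact key
end

section
/- Let μ be a locally finite Borel measure on ℝ^d, let v : ℝ^d → ℝ^d be a locally μ-integrable Borel vector field, and let Ω₁, Ω₂ ⊆ ℝ^d be open sets. Suppose that for i = 1, 2 the field v has measure-valued divergence with respect to μ on Ω_i, witnessed by Borel measures σ_i⁺, σ_i⁻ finite on compact subsets of Ω_i with ∫ ⟨∇f, v⟩ dμ = ∫ f dσ_i⁻ − ∫ f dσ_i⁺ for every C¹ function f : ℝ^d → ℝ with compact support contained in Ω_i. Then v has measure-valued divergence with respect to μ on Ω₁ ∪ Ω₂: there exist Borel measures σ⁺, σ⁻, finite on compact subsets of Ω₁ ∪ Ω₂, such that ∫ ⟨∇f, v⟩ dμ = ∫ f dσ⁻ − ∫ f dσ⁺ for every C¹ function f : ℝ^d → ℝ with compact support contained in Ω₁ ∪ Ω₂, and moreover for i = 1, 2 and every Borel set A with compact closure contained in Ω_i one has σ⁺(A) + σ_i⁻(A) = σ_i⁺(A) + σ⁻(A). -/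
open MeasureTheory Metric
open scoped RealInnerProductSpace ENNReal

open Set Filter Topology in
lemma mvd_cutoff {d : ℕ} {K U : Set (EuclideanSpace ℝ (Fin d))} (hK : IsCompact K)
    (hU : IsOpen U) (hKU : K ⊆ U) :
    ∃ g : EuclideanSpace ℝ (Fin d) → ℝ, ContDiff ℝ 1 g ∧ HasCompactSupport g ∧ tsupport g ⊆ U ∧
      (∀ x, 0 ≤ g x ∧ g x ≤ 1) ∧ (∀ x, x ∈ K ↔ g x = 1) := by
  obtain ⟨V, hV, hKV, hVU, hVc⟩ := exists_open_between_and_isCompact_closure hK hU hKU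
  obtain ⟨g, hg, hr, hs, h1⟩ := exists_contMDiff_support_eq_eq_one_iff (n := 1)
    (modelWithCornersSelf ℝ (EuclideanSpace ℝ (Fin d))) hV hK.isClosed hKV
  refine ⟨g, hg.contDiff, ?_, ?_, fun x => hr (mem_range_self x), h1⟩
  · rw [HasCompactSupport, tsupport, hs]; exact hVc
  · rw [tsupport, hs]; exact hVU

lemma mvd_integrable {d : ℕ} {U : Set (EuclideanSpace ℝ (Fin d))}
    {σ : Measure (EuclideanSpace ℝ (Fin d))}
    (hσ : ∀ K : Set (EuclideanSpace ℝ (Fin d)), IsCompact K → K ⊆ U → σ K < ∞)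
    {g : EuclideanSpace ℝ (Fin d) → ℝ} (hg : Continuous g) (hc : HasCompactSupport g)
    (hU : tsupport g ⊆ U) : Integrable g σ := by
  rw [← integrableOn_iff_integrable_of_support_subset (subset_tsupport g)]
  obtain ⟨C, hC⟩ := hc.exists_bound_of_continuous hg
  exact Measure.integrableOn_of_bounded (M := C) (hσ _ hc hU).ne hg.aestronglyMeasurable
    (Filter.Eventually.of_forall hC)

open Set Filter Topology in
lemma mvd_compact {d : ℕ} {U : Set (EuclideanSpace ℝ (Fin d))} (hUo : IsOpen U)
    {σ : Measure (EuclideanSpace ℝ (Fin d))}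
    (hσ : ∀ K : Set (EuclideanSpace ℝ (Fin d)), IsCompact K → K ⊆ U → σ K < ∞)
    {g : EuclideanSpace ℝ (Fin d) → ℝ} (hg : Continuous g) (hc : HasCompactSupport g)
    (hU : tsupport g ⊆ U) (h01 : ∀ x, 0 ≤ g x ∧ g x ≤ 1)
    {K : Set (EuclideanSpace ℝ (Fin d))} (hK : IsCompact K) (h1 : ∀ x, x ∈ K ↔ g x = 1) :
    Tendsto (fun n : ℕ => ∫ x, g x ^ (n + 1) ∂σ) atTop (𝓝 (σ.real K)) := by
  have : σ.real K = ∫ x, K.indicator (fun _ => (1 : ℝ)) x ∂σ := by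
    rw [integral_indicator hK.measurableSet]; simp
  rw [this]
  refine tendsto_integral_of_dominated_convergence g
    (fun n => (hg.pow _).aestronglyMeasurable) (mvd_integrable hσ hg hc hU) ?_ ?_
  · intro n
    refine Eventually.of_forall fun x => ?_
    rw [Real.norm_of_nonneg (pow_nonneg (h01 x).1 _)]
    exact pow_le_of_le_one (h01 x).1 (h01 x).2 (by simp)
  · refine Eventually.of_forall fun x => ?_
    by_cases hx : x ∈ K
    · simp [hx, (h1 x).1 hx]
    · have hlt : g x < 1 := lt_of_le_of_ne (h01 x).2 (fun h => hx ((h1 x).2 h))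
      simp only [hx, not_false_eq_true, indicator_of_notMem]
      exact (tendsto_pow_atTop_nhds_zero_of_lt_one (h01 x).1 hlt).comp (tendsto_add_atTop_nat 1)

open Set Filter Topology in
lemma mvd_unique {d : ℕ} {U : Set (EuclideanSpace ℝ (Fin d))} (hUo : IsOpen U)
    {α β : Measure (EuclideanSpace ℝ (Fin d))}
    (hα : ∀ K : Set (EuclideanSpace ℝ (Fin d)), IsCompact K → K ⊆ U → α K < ∞)
    (hβ : ∀ K : Set (EuclideanSpace ℝ (Fin d)), IsCompact K → K ⊆ U → β K < ∞)
    (h : ∀ f : EuclideanSpace ℝ (Fin d) → ℝ,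
      ContDiff ℝ 1 f → HasCompactSupport f → tsupport f ⊆ U → ∫ x, f x ∂α = ∫ x, f x ∂β)
    {A : Set (EuclideanSpace ℝ (Fin d))} (hAm : MeasurableSet A)
    (hAc : IsCompact (closure A)) (hAU : closure A ⊆ U) : α A = β A := by
  have key : ∀ K : Set (EuclideanSpace ℝ (Fin d)), IsCompact K → K ⊆ U → α K = β K := by
    intro K hK hKU
    obtain ⟨g, hg, hc, hs, h01, h1⟩ := mvd_cutoff hK hUo hKU
    have ta := mvd_compact hUo hα hg.continuous hc hs h01 hK h1
    have tb := mvd_compact hUo hβ hg.continuous hc hs h01 hK h1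
    have he : (fun n : ℕ => ∫ x, g x ^ (n + 1) ∂α) = fun n : ℕ => ∫ x, g x ^ (n + 1) ∂β := by
      funext n
      have hsub : tsupport (fun x => g x ^ (n + 1)) ⊆ tsupport g := by
        apply closure_mono
        intro x hx hx0
        exact hx (by simp [hx0])
      exact h _ (hg.pow _) (hc.of_isClosed_subset (isClosed_tsupport _) hsub) (hsub.trans hs)
    rw [he] at ta
    have := tendsto_nhds_unique ta tb
    exact (measureReal_eq_measureReal_iff (hα K hK hKU).ne (hβ K hK hKU).ne).1 this
  have hr : α.restrict (closure A) = β.restrict (closure A) := by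
    haveI : IsFiniteMeasure (α.restrict (closure A)) :=
      ⟨by rw [Measure.restrict_apply_univ]; exact hα _ hAc hAU⟩
    refine ext_of_generate_finite {s | IsClosed s} ?_ isPiSystem_isClosed ?_ ?_
    · rw [BorelSpace.measurable_eq (α := EuclideanSpace ℝ (Fin d)), borel_eq_generateFrom_isClosed]
    · intro s hs
      have hs : IsClosed s := hs
      rw [Measure.restrict_apply hs.measurableSet, Measure.restrict_apply hs.measurableSet]
      exact key _ (hAc.inter_left hs) (inter_subset_right.trans hAU)
    · rw [Measure.restrict_apply_univ, Measure.restrict_apply_univ]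
      exact key _ hAc hAU
  have := congrArg (fun m => m A) hr
  simpa [Measure.restrict_apply hAm, inter_eq_left.2 subset_closure] using this

open Set in
lemma mvd_transfer {d : ℕ} {U : Set (EuclideanSpace ℝ (Fin d))}
    {p m p1 m1 : Measure (EuclideanSpace ℝ (Fin d))}
    (hp : ∀ K : Set (EuclideanSpace ℝ (Fin d)), IsCompact K → K ⊆ U → p K < ∞)
    (hm : ∀ K : Set (EuclideanSpace ℝ (Fin d)), IsCompact K → K ⊆ U → m K < ∞)
    (hp1 : ∀ K : Set (EuclideanSpace ℝ (Fin d)), IsCompact K → K ⊆ U → p1 K < ∞)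
    (hm1 : ∀ K : Set (EuclideanSpace ℝ (Fin d)), IsCompact K → K ⊆ U → m1 K < ∞)
    (h : ∀ A : Set (EuclideanSpace ℝ (Fin d)), MeasurableSet A →
        IsCompact (closure A) → closure A ⊆ U → p A + m1 A = p1 A + m A)
    {g : EuclideanSpace ℝ (Fin d) → ℝ} (hg : Continuous g) (hc : HasCompactSupport g)
    (hU : tsupport g ⊆ U) :
    ∫ x, g x ∂m1 - ∫ x, g x ∂p1 = ∫ x, g x ∂m - ∫ x, g x ∂p := by
  have hr : (p + m1).restrict (tsupport g) = (p1 + m).restrict (tsupport g) := by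
    ext s hs
    rw [Measure.restrict_apply hs, Measure.restrict_apply hs, Measure.add_apply, Measure.add_apply]
    have hsub : closure (s ∩ tsupport g) ⊆ tsupport g :=
      closure_minimal inter_subset_right (isClosed_tsupport g)
    exact h _ (hs.inter (isClosed_tsupport g).measurableSet)
      (hc.of_isClosed_subset isClosed_closure hsub) (hsub.trans hU)
  have e : ∫ x, g x ∂(p + m1) = ∫ x, g x ∂(p1 + m) := by
    rw [← setIntegral_tsupport (ν := p + m1), ← setIntegral_tsupport (ν := p1 + m), hr]
  rw [integral_add_measure (mvd_integrable hp hg hc hU) (mvd_integrable hm1 hg hc hU),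
    integral_add_measure (mvd_integrable hp1 hg hc hU) (mvd_integrable hm hg hc hU)] at e
  linarith

lemma mvd_grad_integrable {d : ℕ}
    {μ : Measure (EuclideanSpace ℝ (Fin d))} 
    {v : EuclideanSpace ℝ (Fin d) → EuclideanSpace ℝ (Fin d)}
    (hvInt : LocallyIntegrable v μ)
    {f : EuclideanSpace ℝ (Fin d) → ℝ} (hf : ContDiff ℝ 1 f) (hc : HasCompactSupport f) :
    Integrable (fun x => ⟪gradient f x, v x⟫) μ := by
  have hcont : Continuous (gradient f) :=
    (LinearIsometryEquiv.continuous _).comp (hf.continuous_fderiv (by simp))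
  have hcg : HasCompactSupport (gradient f) :=
    (hc.fderiv ℝ).comp_left (g := (InnerProductSpace.toDual ℝ _).symm) (map_zero _)
  obtain ⟨C, hC⟩ := hcg.exists_bound_of_continuous hcont
  have hsub : Function.support (fun x => ⟪gradient f x, v x⟫) ⊆ tsupport (gradient f) := by
    intro x hx
    apply subset_tsupport
    intro h0
    exact hx (by simp [h0])
  rw [← integrableOn_iff_integrable_of_support_subset hsub]
  have hv := (hvInt.integrableOn_isCompact hcg)
  refine (hv.norm.const_mul C).mono' (hcont.aestronglyMeasurable.inner hv.aestronglyMeasurable)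
    (Filter.Eventually.of_forall fun x => ?_)
  exact (norm_inner_le_norm _ _).trans (mul_le_mul_of_nonneg_right (hC x) (norm_nonneg _))

lemma mvd_grad_add {d : ℕ}
    {μ : Measure (EuclideanSpace ℝ (Fin d))} 
    {v : EuclideanSpace ℝ (Fin d) → EuclideanSpace ℝ (Fin d)}
    (hvInt : LocallyIntegrable v μ)
    {f g : EuclideanSpace ℝ (Fin d) → ℝ} (hf : ContDiff ℝ 1 f) (hc : HasCompactSupport f)
    (hg : ContDiff ℝ 1 g) (hcg : HasCompactSupport g) :
    ∫ x, ⟪gradient (fun x => f x + g x) x, v x⟫ ∂μ =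
      ∫ x, ⟪gradient f x, v x⟫ ∂μ + ∫ x, ⟪gradient g x, v x⟫ ∂μ := by
  rw [← integral_add (mvd_grad_integrable hvInt hf hc) (mvd_grad_integrable hvInt hg hcg)]
  congr 1
  funext x
  rw [← inner_add_left]
  congr 1
  simp only [gradient]
  rw [fderiv_fun_add (hf.differentiable (by simp) x) (hg.differentiable (by simp) x), map_add]

open Set in
/-- restriction piece is finite and compatibility -/
lemma mvd_closure_sub {d : ℕ} {Ω₁ Ω₂ : Set (EuclideanSpace ℝ (Fin d))} (hΩ₁ : IsOpen Ω₁)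
    (hΩ₂ : IsOpen Ω₂) {K : Set (EuclideanSpace ℝ (Fin d))} (hK : IsCompact K) (hKU : K ⊆ Ω₁ ∪ Ω₂) :
    IsCompact (K ∩ {x | infEDist x Ω₂ᶜ ≤ infEDist x Ω₁ᶜ}) ∧
      K ∩ {x | infEDist x Ω₂ᶜ ≤ infEDist x Ω₁ᶜ} ⊆ Ω₁ := by
  refine ⟨hK.inter_right (isClosed_le continuous_infEDist continuous_infEDist), ?_⟩
  rintro x ⟨hx, hle⟩
  by_contra h1
  have z1 := (mem_iff_infEDist_zero_of_closed hΩ₁.isClosed_compl).1 (show x ∈ Ω₁ᶜ from h1)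
  have hle : infEDist x Ω₂ᶜ ≤ infEDist x Ω₁ᶜ := hle
  rw [z1] at hle
  have h2 : x ∈ Ω₂ᶜ :=
    (mem_iff_infEDist_zero_of_closed hΩ₂.isClosed_compl).2 (le_antisymm hle bot_le)
  exact (hKU hx).elim h1 h2

/-- **Gluing of the measure-valued divergence.** If `v` has measure-valued divergence
with respect to `μ` on both `Ω₁` and `Ω₂`, then it has measure-valued divergence on
`Ω₁ ∪ Ω₂`, and the glued divergence restricts on each `Ωᵢ` to the given one. -/
theorem measure_valued_divergence_union {d : ℕ}
    (μ : Measure (EuclideanSpace ℝ (Fin d))) [IsLocallyFiniteMeasure μ]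
    (v : EuclideanSpace ℝ (Fin d) → EuclideanSpace ℝ (Fin d))
    (hvMeas : Measurable v) (hvInt : LocallyIntegrable v μ)
    (Ω₁ Ω₂ : Set (EuclideanSpace ℝ (Fin d))) (hΩ₁ : IsOpen Ω₁) (hΩ₂ : IsOpen Ω₂)
    (σp₁ σm₁ σp₂ σm₂ : Measure (EuclideanSpace ℝ (Fin d)))
    (hσp₁ : ∀ K : Set (EuclideanSpace ℝ (Fin d)), IsCompact K → K ⊆ Ω₁ → σp₁ K < ∞)
    (hσm₁ : ∀ K : Set (EuclideanSpace ℝ (Fin d)), IsCompact K → K ⊆ Ω₁ → σm₁ K < ∞)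
    (hσp₂ : ∀ K : Set (EuclideanSpace ℝ (Fin d)), IsCompact K → K ⊆ Ω₂ → σp₂ K < ∞)
    (hσm₂ : ∀ K : Set (EuclideanSpace ℝ (Fin d)), IsCompact K → K ⊆ Ω₂ → σm₂ K < ∞)
    (hdiv₁ : ∀ f : EuclideanSpace ℝ (Fin d) → ℝ,
      ContDiff ℝ 1 f → HasCompactSupport f → tsupport f ⊆ Ω₁ →
      ∫ x, ⟪gradient f x, v x⟫ ∂μ = ∫ x, f x ∂σm₁ - ∫ x, f x ∂σp₁)
    (hdiv₂ : ∀ f : EuclideanSpace ℝ (Fin d) → ℝ,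
      ContDiff ℝ 1 f → HasCompactSupport f → tsupport f ⊆ Ω₂ →
      ∫ x, ⟪gradient f x, v x⟫ ∂μ = ∫ x, f x ∂σm₂ - ∫ x, f x ∂σp₂) :
    ∃ σp σm : Measure (EuclideanSpace ℝ (Fin d)),
      (∀ K : Set (EuclideanSpace ℝ (Fin d)), IsCompact K → K ⊆ Ω₁ ∪ Ω₂ → σp K < ∞) ∧
      (∀ K : Set (EuclideanSpace ℝ (Fin d)), IsCompact K → K ⊆ Ω₁ ∪ Ω₂ → σm K < ∞) ∧
      (∀ f : EuclideanSpace ℝ (Fin d) → ℝ,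
        ContDiff ℝ 1 f → HasCompactSupport f → tsupport f ⊆ Ω₁ ∪ Ω₂ →
        ∫ x, ⟪gradient f x, v x⟫ ∂μ = ∫ x, f x ∂σm - ∫ x, f x ∂σp) ∧
      (∀ A : Set (EuclideanSpace ℝ (Fin d)), MeasurableSet A →
        IsCompact (closure A) → closure A ⊆ Ω₁ →
        σp A + σm₁ A = σp₁ A + σm A) ∧
      (∀ A : Set (EuclideanSpace ℝ (Fin d)), MeasurableSet A →
        IsCompact (closure A) → closure A ⊆ Ω₂ →
        σp A + σm₂ A = σp₂ A + σm A) := by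
  classical
  set B : Set (EuclideanSpace ℝ (Fin d)) := {x | infEDist x Ω₂ᶜ ≤ infEDist x Ω₁ᶜ} with hB
  have hBc : IsClosed B := isClosed_le continuous_infEDist continuous_infEDist
  have hBm : MeasurableSet B := hBc.measurableSet
  have hBcomp : Bᶜ ⊆ {x | infEDist x Ω₁ᶜ ≤ infEDist x Ω₂ᶜ} := fun x hx =>
    (le_total (infEDist x Ω₂ᶜ) (infEDist x Ω₁ᶜ)).elim (fun h => absurd h hx) id
  have hcl : IsClosed {x : EuclideanSpace ℝ (Fin d) | infEDist x Ω₁ᶜ ≤ infEDist x Ω₂ᶜ} :=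
    isClosed_le continuous_infEDist continuous_infEDist
  have fin : ∀ σ₁ σ₂ : Measure (EuclideanSpace ℝ (Fin d)),
      (∀ K : Set (EuclideanSpace ℝ (Fin d)), IsCompact K → K ⊆ Ω₁ → σ₁ K < ∞) →
      (∀ K : Set (EuclideanSpace ℝ (Fin d)), IsCompact K → K ⊆ Ω₂ → σ₂ K < ∞) →
      ∀ K : Set (EuclideanSpace ℝ (Fin d)), IsCompact K → K ⊆ Ω₁ ∪ Ω₂ →
        (σ₁.restrict B + σ₂.restrict Bᶜ) K < ∞ := by
    intro σ₁ σ₂ h₁ h₂ K hK hKU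
    rw [Measure.add_apply, Measure.restrict_apply hK.measurableSet,
      Measure.restrict_apply hK.measurableSet]
    obtain ⟨c1, s1⟩ := mvd_closure_sub hΩ₁ hΩ₂ hK hKU
    obtain ⟨c2, s2⟩ := mvd_closure_sub hΩ₂ hΩ₁ hK (by rwa [Set.union_comm])
    exact ENNReal.add_lt_top.2 ⟨h₁ _ c1 s1,
      (measure_mono (Set.inter_subset_inter_right _ hBcomp)).trans_lt (h₂ _ c2 s2)⟩
  -- agreement on the overlap
  have key : ∀ A : Set (EuclideanSpace ℝ (Fin d)), MeasurableSet A →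
      IsCompact (closure A) → closure A ⊆ Ω₁ → closure A ⊆ Ω₂ →
      σp₁ A + σm₂ A = σp₂ A + σm₁ A := by
    intro A hA hAc hA1 hA2
    have := mvd_unique (U := Ω₁ ∩ Ω₂) (α := σp₁ + σm₂) (β := σp₂ + σm₁) (hΩ₁.inter hΩ₂)
      (fun K hK h => by
        rw [Measure.add_apply]
        exact ENNReal.add_lt_top.2 ⟨hσp₁ K hK (h.trans Set.inter_subset_left),
          hσm₂ K hK (h.trans Set.inter_subset_right)⟩)
      (fun K hK h => by
        rw [Measure.add_apply]
        exact ENNReal.add_lt_top.2 ⟨hσp₂ K hK (h.trans Set.inter_subset_right),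
          hσm₁ K hK (h.trans Set.inter_subset_left)⟩)
      (fun f hf hc hs => by
        have s1 := hs.trans Set.inter_subset_left
        have s2 := hs.trans Set.inter_subset_right
        have e1 := hdiv₁ f hf hc s1
        have e2 := hdiv₂ f hf hc s2
        rw [integral_add_measure (mvd_integrable hσp₁ hf.continuous hc s1)
            (mvd_integrable hσm₂ hf.continuous hc s2),
          integral_add_measure (mvd_integrable hσp₂ hf.continuous hc s2)
            (mvd_integrable hσm₁ hf.continuous hc s1)]
        linarith) hA hAc (Set.subset_inter hA1 hA2)
    simpa using this
  have agree₁ : ∀ A : Set (EuclideanSpace ℝ (Fin d)), MeasurableSet A →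
      IsCompact (closure A) → closure A ⊆ Ω₁ →
      (σp₁.restrict B + σp₂.restrict Bᶜ) A + σm₁ A
        = σp₁ A + (σm₁.restrict B + σm₂.restrict Bᶜ) A := by
    intro A hA hAc hA1
    simp only [Measure.add_apply, Measure.restrict_apply hA]
    obtain ⟨c2, s2⟩ := mvd_closure_sub hΩ₂ hΩ₁ hAc (hA1.trans Set.subset_union_right)
    have hsub := closure_minimal (Set.inter_subset_inter subset_closure hBcomp : A ∩ Bᶜ ⊆ _)
      c2.isClosed
    have k := key (A ∩ Bᶜ) (hA.inter hBm.compl) (c2.of_isClosed_subset isClosed_closure hsub)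
      ((closure_mono Set.inter_subset_left).trans hA1) (hsub.trans s2)
    rw [← measure_inter_add_diff (μ := σm₁) A hBm, ← measure_inter_add_diff (μ := σp₁) A hBm,
      Set.diff_eq]
    calc _ = (σp₁ (A ∩ B) + σm₁ (A ∩ B)) + (σp₂ (A ∩ Bᶜ) + σm₁ (A ∩ Bᶜ)) := by ring
      _ = _ := by rw [← k]; ring
  have agree₂ : ∀ A : Set (EuclideanSpace ℝ (Fin d)), MeasurableSet A →
      IsCompact (closure A) → closure A ⊆ Ω₂ →
      (σp₁.restrict B + σp₂.restrict Bᶜ) A + σm₂ A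
        = σp₂ A + (σm₁.restrict B + σm₂.restrict Bᶜ) A := by
    intro A hA hAc hA2
    simp only [Measure.add_apply, Measure.restrict_apply hA]
    obtain ⟨c1, s1⟩ := mvd_closure_sub hΩ₁ hΩ₂ hAc (hA2.trans Set.subset_union_right)
    have hsub := closure_minimal (Set.inter_subset_inter subset_closure subset_rfl : A ∩ B ⊆ _)
      c1.isClosed
    have k := key (A ∩ B) (hA.inter hBm) (c1.of_isClosed_subset isClosed_closure hsub)
      (hsub.trans s1) ((closure_mono Set.inter_subset_left).trans hA2)
    rw [← measure_inter_add_diff (μ := σm₂) A hBm, ← measure_inter_add_diff (μ := σp₂) A hBm,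
      Set.diff_eq]
    calc _ = (σp₁ (A ∩ B) + σm₂ (A ∩ B)) + (σp₂ (A ∩ Bᶜ) + σm₂ (A ∩ Bᶜ)) := by ring
      _ = _ := by rw [k]; ring
  have finp := fin _ _ hσp₁ hσp₂
  have finm := fin _ _ hσm₁ hσm₂
  refine ⟨σp₁.restrict B + σp₂.restrict Bᶜ, σm₁.restrict B + σm₂.restrict Bᶜ,
    finp, finm, ?_, agree₁, agree₂⟩
  intro f hf hc hs
  have hCc : IsCompact (tsupport f \ Ω₂) := hc.diff hΩ₂
  have hC1 : tsupport f \ Ω₂ ⊆ Ω₁ := fun x hx => (hs hx.1).resolve_right hx.2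
  obtain ⟨L, hL, hCL, hL1⟩ := exists_compact_between hCc hΩ₁ hC1
  obtain ⟨χ, hχ, hχc, hχs, -, hχ1⟩ := mvd_cutoff hL hΩ₁ hL1
  have hf1 : ContDiff ℝ 1 (fun x => χ x * f x) := hχ.mul hf
  have hf2 : ContDiff ℝ 1 (fun x => (1 - χ x) * f x) := (contDiff_const.sub hχ).mul hf
  have hs1 : tsupport (fun x => χ x * f x) ⊆ tsupport χ :=
    closure_mono fun x hx h0 => hx (by simp [h0])
  have hs2 : tsupport (fun x => (1 - χ x) * f x) ⊆ tsupport f :=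
    closure_mono fun x hx h0 => hx (by simp [h0])
  have hs2' : tsupport (fun x => (1 - χ x) * f x) ⊆ (interior L)ᶜ := by
    refine closure_minimal ?_ isOpen_interior.isClosed_compl
    intro x hx hxL
    exact hx (by simp [(hχ1 x).1 (interior_subset hxL)])
  have hs2Ω : tsupport (fun x => (1 - χ x) * f x) ⊆ Ω₂ := by
    intro x hx
    by_contra h2
    exact hs2' hx (hCL ⟨hs2 hx, h2⟩)
  have hc1 : HasCompactSupport (fun x => χ x * f x) :=
    hχc.of_isClosed_subset (isClosed_tsupport _) hs1
  have hc2 : HasCompactSupport (fun x => (1 - χ x) * f x) :=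
    hc.of_isClosed_subset (isClosed_tsupport _) hs2
  have hs1Ω := hs1.trans hχs
  have hsum : f = fun x => (fun x => χ x * f x) x + (fun x => (1 - χ x) * f x) x := by
    funext x; simp only; ring
  have u1 := Set.subset_union_left (s := Ω₁) (t := Ω₂)
  have u2 := Set.subset_union_right (s := Ω₁) (t := Ω₂)
  have t1 := mvd_transfer (fun K hK h => finp K hK (h.trans u1))
    (fun K hK h => finm K hK (h.trans u1)) hσp₁ hσm₁ agree₁ hf1.continuous hc1 hs1Ω
  have t2 := mvd_transfer (fun K hK h => finp K hK (h.trans u2))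
    (fun K hK h => finm K hK (h.trans u2)) hσp₂ hσm₂ agree₂ hf2.continuous hc2 hs2Ω
  have g := mvd_grad_add hvInt hf1 hc1 hf2 hc2
  rw [← hsum, hdiv₁ _ hf1 hc1 hs1Ω, hdiv₂ _ hf2 hc2 hs2Ω, t1, t2] at g
  have im := integral_add (mvd_integrable finm hf1.continuous hc1 (hs1Ω.trans u1))
    (mvd_integrable finm hf2.continuous hc2 (hs2Ω.trans u2))
  have ip := integral_add (mvd_integrable finp hf1.continuous hc1 (hs1Ω.trans u1))
    (mvd_integrable finp hf2.continuous hc2 (hs2Ω.trans u2))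
  rw [g]
  have e : ∀ x, χ x * f x + (1 - χ x) * f x = f x := fun x => by ring
  simp only [e] at im ip
  rw [im, ip]
  ring
end

section
/- Let μ be a locally finite Borel measure on ℝ^d and let f : ℝ^d → ℝ be a Lipschitz function with compact support, with Lipschitz constant L. For x ∈ ℝ^d define the asymptotic Lipschitz constant lip_a f(x) := inf over r > 0 of the infimum of all constants K ≥ 0 such that |f(y) − f(z)| ≤ K‖y − z‖ for all y, z in the open ball of radius r centered at x. Then there exists a sequence (f_n) of continuously differentiable functions on ℝ^d with compact support such that: each f_n is Lipschitz with constant at most L; f_n → f in L²(μ); and for every x ∈ ℝ^d, limsup_{n→∞} ‖∇f_n(x)‖ ≤ lip_a f(x). -/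
open MeasureTheory Metric Filter

/-- The asymptotic Lipschitz constant of `f` at `x`: the infimum over `r > 0` of the
infimum of all constants `K ≥ 0` such that `f` is `K`-Lipschitz on the open ball of
radius `r` centered at `x`. -/
noncomputable def asympLipConst {X : Type*} [PseudoMetricSpace X] (f : X → ℝ) (x : X) : ℝ :=
  ⨅ r : {r : ℝ // 0 < r},
    sInf {K : ℝ | 0 ≤ K ∧ ∀ y ∈ ball x r.1, ∀ z ∈ ball x r.1, |f y - f z| ≤ K * dist y z}

open ContinuousLinearMap in
open scoped Convolution in
theorem conv_diff_le {d : ℕ} (φ : ContDiffBump (0 : EuclideanSpace ℝ (Fin d)))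
    (f : EuclideanSpace ℝ (Fin d) → ℝ) (hf : Continuous f)
    (y z : EuclideanSpace ℝ (Fin d)) (C : ℝ)
    (h : ∀ t ∈ ball (0 : EuclideanSpace ℝ (Fin d)) φ.rOut, |f (y - t) - f (z - t)| ≤ C) :
    |(φ.normed volume ⋆[lsmul ℝ ℝ, volume] f : EuclideanSpace ℝ (Fin d) → ℝ) y
      - (φ.normed volume ⋆[lsmul ℝ ℝ, volume] f : EuclideanSpace ℝ (Fin d) → ℝ) z| ≤ C := by
  have hint : ∀ w, Integrable (fun t => φ.normed volume t * f (w - t)) volume := by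
    intro w
    apply Continuous.integrable_of_hasCompactSupport
    · exact φ.continuous_normed.mul (hf.comp (continuous_const.sub continuous_id))
    · exact φ.hasCompactSupport_normed.mul_right
  simp only [convolution_def, lsmul_apply, smul_eq_mul]
  rw [← integral_sub (hint y) (hint z), ← Real.norm_eq_abs]
  have h2 : ∫ t, φ.normed volume t * C = C := by
    rw [integral_mul_const, φ.integral_normed, one_mul]
  refine (norm_integral_le_of_norm_le (g := fun t => φ.normed volume t * C)
    (φ.integrable_normed.mul_const C) ?_).trans h2.le
  refine Eventually.of_forall fun t => ?_
  rw [← mul_sub, norm_mul, Real.norm_eq_abs, Real.norm_eq_abs, abs_of_nonneg (φ.nonneg_normed t)]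
  by_cases ht : t ∈ ball (0 : EuclideanSpace ℝ (Fin d)) φ.rOut
  · exact mul_le_mul_of_nonneg_left (h t ht) (φ.nonneg_normed t)
  · have : φ.normed volume t = 0 := by
      rw [← Function.notMem_support, φ.support_normed_eq]; exact ht
    simp [this]

open ContinuousLinearMap in
open scoped Convolution in
/-- Approximation of a compactly supported Lipschitz function by `C¹` compactly
supported functions, uniformly Lipschitz, converging in `L²(μ)` and with gradient
norms asymptotically bounded by the asymptotic Lipschitz constant. -/
theorem lipschitz_approx_by_C1 {d : ℕ}
    (μ : Measure (EuclideanSpace ℝ (Fin d))) [IsLocallyFiniteMeasure μ]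
    (f : EuclideanSpace ℝ (Fin d) → ℝ) (L : NNReal) (hf : LipschitzWith L f)
    (hsupp : HasCompactSupport f) :
    ∃ fn : ℕ → EuclideanSpace ℝ (Fin d) → ℝ,
      (∀ n, ContDiff ℝ 1 (fn n)) ∧
      (∀ n, HasCompactSupport (fn n)) ∧
      (∀ n, LipschitzWith L (fn n)) ∧
      Tendsto (fun n => eLpNorm (fun x => fn n x - f x) 2 μ) atTop (nhds 0) ∧
      ∀ x, limsup (fun n => ‖gradient (fn n) x‖) atTop ≤ asympLipConst f x := by
  let δ : ℕ → ℝ := fun n => 1 / ((n : ℝ) + 1)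
  have hδ : ∀ n, 0 < δ n := fun n => Nat.one_div_pos_of_nat
  have hδ1 : ∀ n, δ n ≤ 1 := fun n => by
    have := Nat.one_div_le_one_div (α := ℝ) (Nat.zero_le n)
    simpa [δ] using this
  have hδ0 : Tendsto δ atTop (nhds 0) := tendsto_one_div_add_atTop_nhds_zero_nat
  let φ : ℕ → ContDiffBump (0 : EuclideanSpace ℝ (Fin d)) := fun n =>
    ⟨δ n / 2, δ n, half_pos (hδ n), half_lt_self (hδ n)⟩
  let fn : ℕ → EuclideanSpace ℝ (Fin d) → ℝ := fun n =>
    ((φ n).normed volume ⋆[lsmul ℝ ℝ, volume] f)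
  let S := cthickening 1 (tsupport f)
  have hS : IsCompact S := IsCompact.cthickening hsupp
  have hfS : ∀ x, x ∉ S → ∀ y ∈ closedBall x 1, f y = 0 := by
    intro x hx y hy
    by_contra hne
    exact hx (mem_cthickening_of_dist_le x y 1 _ (subset_tsupport f hne)
      (by rw [dist_comm]; exact hy))
  have hfx : ∀ x, x ∉ S → f x = 0 := fun x hx => hfS x hx x (by simp)
  have hzero : ∀ n x, x ∉ S → fn n x = 0 := by
    intro n x hx
    have := ContDiffBump.dist_normed_convolution_le (φ := φ n) (x₀ := x) (ε := 0) (μ := volume)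
      hf.continuous.aestronglyMeasurable (fun y hy => by
        rw [hfx x hx, hfS x hx y (mem_closedBall.2 ((mem_ball.1 hy).le.trans (hδ1 n)))]; simp)
    rw [hfx x hx] at this
    exact dist_le_zero.1 this
  have hclose : ∀ n x, |fn n x - f x| ≤ L * δ n := by
    intro n x
    refine ContDiffBump.dist_normed_convolution_le (φ := φ n) (x₀ := x) (μ := volume)
      hf.continuous.aestronglyMeasurable (fun y hy => ?_)
    exact (hf.dist_le_mul y x).trans
      (mul_le_mul_of_nonneg_left (mem_ball.1 hy).le L.2)
  refine ⟨fn, ?_, ?_, ?_, ?_, ?_⟩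
  · intro n
    exact (φ n).hasCompactSupport_normed.contDiff_convolution_left _ (φ n).contDiff_normed
      hf.continuous.locallyIntegrable
  · intro n
    exact HasCompactSupport.intro hS (hzero n)
  · intro n
    refine LipschitzWith.of_dist_le_mul fun y z => ?_
    refine conv_diff_le (φ n) f hf.continuous y z _ fun t _ => ?_
    have := hf.dist_le_mul (y - t) (z - t)
    rwa [dist_sub_right] at this
  · have hb : ∀ n, eLpNorm (fun x => fn n x - f x) 2 μ
        ≤ ENNReal.ofReal (L * δ n) * μ S ^ (1 / (2 : ENNReal).toReal) := by
      intro n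
      have h1 : eLpNorm (fun x => fn n x - f x) 2 μ
          ≤ eLpNorm (S.indicator fun _ => (L * δ n : ℝ)) 2 μ := by
        refine eLpNorm_mono fun x => ?_
        by_cases hx : x ∈ S
        · rw [Set.indicator_of_mem hx]
          exact (hclose n x).trans (le_abs_self _)
        · simp [hzero n x hx, hfx x hx]
      refine h1.trans ((eLpNorm_indicator_const_le _ _).trans ?_)
      rw [Real.enorm_of_nonneg (mul_nonneg L.coe_nonneg (hδ n).le)]
    have hlim : Tendsto (fun n => ENNReal.ofReal (L * δ n) * μ S ^ (1 / (2 : ENNReal).toReal))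
        atTop (nhds 0) := by
      have h1 : Tendsto (fun n => ENNReal.ofReal (L * δ n)) atTop (nhds 0) := by
        have := ENNReal.tendsto_ofReal (hδ0.const_mul (L : ℝ))
        simpa using this
      have h2 := ENNReal.Tendsto.mul_const (b := μ S ^ (1 / (2 : ENNReal).toReal)) h1
        (Or.inr (ENNReal.rpow_ne_top_of_nonneg (by positivity) hS.measure_lt_top.ne))
      simpa using h2
    exact tendsto_of_tendsto_of_tendsto_of_le_of_le tendsto_const_nhds hlim
      (fun _ => zero_le) hb
  · intro x
    haveI : Nonempty {r : ℝ // 0 < r} := ⟨⟨1, one_pos⟩⟩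
    refine le_ciInf fun r => ?_
    refine le_csInf ⟨L, L.2, fun y _ z _ => hf.dist_le_mul y z⟩ ?_
    rintro K ⟨hK, hKf⟩
    have hr := r.2
    refine limsup_le_of_le (isCoboundedUnder_le_of_le atTop (x := 0) fun n => norm_nonneg _) ?_
    filter_upwards [hδ0.eventually (gt_mem_nhds (half_pos hr))] with n hn
    have hg : ‖gradient (fn n) x‖ = ‖fderiv ℝ (fn n) x‖ := by
      rw [gradient, LinearIsometryEquiv.norm_map]
    rw [hg]
    refine norm_fderiv_le_of_lip' ℝ hK ?_
    filter_upwards [ball_mem_nhds x (half_pos hr)] with y hy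
    rw [← dist_eq_norm y x]
    have key : ∀ w ∈ ball x (r.1 / 2), ∀ t ∈ ball (0 : EuclideanSpace ℝ (Fin d)) (δ n),
        w - t ∈ ball x r.1 := by
      intro w hw t ht
      rw [mem_ball, dist_eq_norm] at *
      rw [sub_zero] at ht
      have : w - t - x = (w - x) - t := by abel
      rw [this]
      have := norm_sub_le (w - x) t
      linarith
    refine conv_diff_le (φ n) f hf.continuous y x _ fun t ht => ?_
    have := hKf _ (key y hy t ht) _ (key x (mem_ball_self (half_pos hr)) t ht)
    rwa [dist_sub_right] at this
end
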